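/- arXiv:math/0404424 — 5 statements merged into one kernel-verified Lean document; each statement's English description precedes it below -/
import Mathlib

section
/- Let Ω ⊂ ℝⁿ be a bounded open set, 0 < λ ≤ Λ, γ ≥ 0, K ≥ 0, and let F : S(n) × ℝⁿ × ℝ × Ω̄ × [0,T] → ℝ be continuous, uniformly elliptic with constants λ, Λ, satisfying the structure condition with constant γ and moduli ω_R, and satisfying sup_{(x,t)} |F(0,0,0,x,t)| ≤ K. Then there exists a constant C, depending only on n, λ, Λ, γ, diam(Ω) and K but not on h, such that for every h ∈ (0,1], any z ∈ C(Ω̄) which is a viscosity solution of F(D²z, Dz, z, x, h) + z/h = 0 in Ω with z = 0 on ∂Ω satisfies ‖z‖_{L^∞(Ω)} ≤ C. -/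
/-!
The zeroth-order term `z / h` alone gives the bound `C = K`. If `z` has a positive maximum over
`closure Ω`, it is attained at some `x₀ ∈ Ω` because `z` vanishes on the frontier. The zero function
is then an admissible test function, so `F(0, 0, z(x₀), x₀, h) + z(x₀)/h ≤ 0`. The structure
condition makes `F` nondecreasing in its third argument, hence
`F(0, 0, z(x₀), x₀, h) ≥ F(0, 0, 0, x₀, h) ≥ -K`, and `z(x₀) ≤ h K ≤ K`. The lower bound is symmetric.
-/

open scoped RealInnerProductSpace
open MeasureTheory Filter Topology Asymptotics Metric Set

noncomputable section

abbrev Eucl (d : ℕ) := EuclideanSpace ℝ (Fin d)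

open Classical in
noncomputable def eigs {d : ℕ} (M : Matrix (Fin d) (Fin d) ℝ) : Fin d → ℝ :=
  if h : M.IsHermitian then h.eigenvalues else 0

noncomputable def specNorm {d : ℕ} (M : Matrix (Fin d) (Fin d) ℝ) : ℝ := ⨆ i, |eigs M i|
noncomputable def posPartNorm {d : ℕ} (M : Matrix (Fin d) (Fin d) ℝ) : ℝ := ⨆ i, max (eigs M i) 0
noncomputable def negPartNorm {d : ℕ} (M : Matrix (Fin d) (Fin d) ℝ) : ℝ := ⨆ i, max (-(eigs M i)) 0
noncomputable def posPartTrace {d : ℕ} (M : Matrix (Fin d) (Fin d) ℝ) : ℝ := ∑ i, max (eigs M i) 0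
noncomputable def negPartTrace {d : ℕ} (M : Matrix (Fin d) (Fin d) ℝ) : ℝ := ∑ i, max (-(eigs M i)) 0

noncomputable def pucciPlus {d : ℕ} (lam Lam : ℝ) (M : Matrix (Fin d) (Fin d) ℝ) : ℝ :=
  -lam * posPartTrace M + Lam * negPartTrace M

noncomputable def pucciMinus {d : ℕ} (lam Lam : ℝ) (M : Matrix (Fin d) (Fin d) ℝ) : ℝ :=
  -Lam * posPartTrace M + lam * negPartTrace M

noncomputable def gradAt {d : ℕ} (φ : Eucl d → ℝ) (x : Eucl d) : Eucl d :=
  (EuclideanSpace.equiv (Fin d) ℝ).symm (fun i => fderiv ℝ φ x (EuclideanSpace.single i 1))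

noncomputable def hessAt {d : ℕ} (φ : Eucl d → ℝ) (x : Eucl d) : Matrix (Fin d) (Fin d) ℝ :=
  Matrix.of fun i j =>
    fderiv ℝ (fun y => fderiv ℝ φ y (EuclideanSpace.single j 1)) x (EuclideanSpace.single i 1)

noncomputable def quadForm {d : ℕ} (M : Matrix (Fin d) (Fin d) ℝ) (v : Eucl d) : ℝ :=
  ∑ i, ∑ j, M i j * v i * v j

def ViscSubsol {d : ℕ} (Ω : Set (Eucl d))
    (G : Matrix (Fin d) (Fin d) ℝ → Eucl d → ℝ → Eucl d → ℝ)
    (g : Eucl d → ℝ) (u : Eucl d → ℝ) : Prop :=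
  ∀ x₀ ∈ Ω, ∀ φ : Eucl d → ℝ, ContDiffAt ℝ 2 φ x₀ →
    IsLocalMax (fun x => u x - φ x) x₀ →
    G (hessAt φ x₀) (gradAt φ x₀) (u x₀) x₀ ≤ g x₀

def ViscSupersol {d : ℕ} (Ω : Set (Eucl d))
    (G : Matrix (Fin d) (Fin d) ℝ → Eucl d → ℝ → Eucl d → ℝ)
    (g : Eucl d → ℝ) (u : Eucl d → ℝ) : Prop :=
  ∀ x₀ ∈ Ω, ∀ φ : Eucl d → ℝ, ContDiffAt ℝ 2 φ x₀ →
    IsLocalMin (fun x => u x - φ x) x₀ →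
    g x₀ ≤ G (hessAt φ x₀) (gradAt φ x₀) (u x₀) x₀

def ViscSol {d : ℕ} (Ω : Set (Eucl d))
    (G : Matrix (Fin d) (Fin d) ℝ → Eucl d → ℝ → Eucl d → ℝ)
    (g : Eucl d → ℝ) (u : Eucl d → ℝ) : Prop :=
  ViscSubsol Ω G g u ∧ ViscSupersol Ω G g u

def UniformlyElliptic {d : ℕ} (lam Lam : ℝ) (X : Set (Eucl d)) (Tset : Set ℝ)
    (F : Matrix (Fin d) (Fin d) ℝ → Eucl d → ℝ → Eucl d → ℝ → ℝ) : Prop :=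
  ∀ M N : Matrix (Fin d) (Fin d) ℝ, M.IsSymm → N.PosSemidef →
    ∀ (P : Eucl d) (v : ℝ), ∀ x ∈ X, ∀ t ∈ Tset,
      -Lam * specNorm N ≤ F (M + N) P v x t - F M P v x t ∧
      F (M + N) P v x t - F M P v x t ≤ -lam * specNorm N

def IsModulus (σ : ℝ → ℝ) : Prop := Monotone σ ∧ Continuous σ ∧ σ 0 = 0

def StructureCondition {d : ℕ} (lam Lam gam : ℝ) (ω : ℝ → ℝ → ℝ)
    (X : Set (Eucl d)) (Tset : Set ℝ)
    (F : Matrix (Fin d) (Fin d) ℝ → Eucl d → ℝ → Eucl d → ℝ → ℝ) : Prop :=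
  (∀ R > 0, IsModulus (ω R)) ∧
  ∀ R > 0, ∀ M N : Matrix (Fin d) (Fin d) ℝ, M.IsSymm → N.IsSymm →
    ∀ (P Q : Eucl d) (r s : ℝ), |r| ≤ R → |s| ≤ R → ∀ x ∈ X, ∀ t ∈ Tset,
      pucciMinus lam Lam (M - N) - gam * ‖P - Q‖ - ω R (max (s - r) 0)
          ≤ F M P r x t - F N Q s x t ∧
      F M P r x t - F N Q s x t
          ≤ pucciPlus lam Lam (M - N) + gam * ‖P - Q‖ + ω R (max (r - s) 0)

noncomputable def supConv {d : ℕ} (Ω : Set (Eucl d)) (u : Eucl d → ℝ) (ε : ℝ) (x : Eucl d) : ℝ :=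
  sSup ((fun y => u y - ‖x - y‖ ^ 2 / (2 * ε)) '' closure Ω)

noncomputable def infConv {d : ℕ} (Ω : Set (Eucl d)) (u : Eucl d → ℝ) (ε : ℝ) (x : Eucl d) : ℝ :=
  sInf ((fun y => u y + ‖x - y‖ ^ 2 / (2 * ε)) '' closure Ω)

noncomputable def supNorm {d : ℕ} (Ω : Set (Eucl d)) (u : Eucl d → ℝ) : ℝ :=
  sSup ((fun y => |u y|) '' closure Ω)

def RotheStep {d : ℕ} (Ω : Set (Eucl d))
    (F : Matrix (Fin d) (Fin d) ℝ → Eucl d → ℝ → Eucl d → ℝ → ℝ)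
    (h : ℝ) (m : ℕ) (zprev znext : Eucl d → ℝ) : Prop :=
  ContinuousOn znext (closure Ω) ∧
  ViscSol Ω (fun M P r x => F M P r x ((m + 1) * h) + r / h) (fun x => zprev x / h) znext ∧
  ∀ x ∈ frontier Ω, znext x = 0

noncomputable def rotheInterp {d : ℕ} (z : ℕ → Eucl d → ℝ) (h : ℝ) (x : Eucl d) (t : ℝ) : ℝ :=
  ((⌊t / h⌋₊ + 1 : ℝ) * h - t) / h * z ⌊t / h⌋₊ x + (t - (⌊t / h⌋₊ : ℝ) * h) / h * z (⌊t / h⌋₊ + 1) x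

def HasSmoothBoundary {d : ℕ} (Ω : Set (Eucl d)) : Prop :=
  ∃ f : Eucl d → ℝ, ContDiff ℝ (⊤ : ℕ∞) f ∧ Ω = {x | f x < 0} ∧ ∀ x ∈ frontier Ω, fderiv ℝ f x ≠ 0

def C21 {d : ℕ} (φ : Eucl d → ℝ → ℝ) : Prop :=
  (∀ t, ContDiff ℝ 2 fun x => φ x t) ∧
  (∀ x, ContDiff ℝ 1 fun t => φ x t) ∧
  Continuous (fun p : Eucl d × ℝ => φ p.1 p.2) ∧
  Continuous (fun p : Eucl d × ℝ => hessAt (fun x => φ x p.2) p.1) ∧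
  Continuous (fun p : Eucl d × ℝ => gradAt (fun x => φ x p.2) p.1) ∧
  Continuous (fun p : Eucl d × ℝ => deriv (φ p.1) p.2)

def ParabolicViscSubsol {d : ℕ} (Ω : Set (Eucl d)) (T : ℝ)
    (F : Matrix (Fin d) (Fin d) ℝ → Eucl d → ℝ → Eucl d → ℝ → ℝ)
    (u : Eucl d × ℝ → ℝ) : Prop :=
  ∀ φ : Eucl d → ℝ → ℝ, C21 φ → ∀ ε > (0:ℝ),
    (∀ x ∈ closure Ω, ∀ t ∈ Icc (0:ℝ) T,
      ε ≤ deriv (φ x) t +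
        F (hessAt (fun y => φ y t) x) (gradAt (fun y => φ y t) x) (φ x t) x t) →
    ¬ ∃ p ∈ Ω ×ˢ Ioc (0:ℝ) T,
        IsLocalMaxOn (fun q : Eucl d × ℝ => u q - φ q.1 q.2) (Ω ×ˢ Ioc (0:ℝ) T) p ∧
        u p - φ p.1 p.2 = 0

def ParabolicViscSupersol {d : ℕ} (Ω : Set (Eucl d)) (T : ℝ)
    (F : Matrix (Fin d) (Fin d) ℝ → Eucl d → ℝ → Eucl d → ℝ → ℝ)
    (u : Eucl d × ℝ → ℝ) : Prop :=
  ∀ φ : Eucl d → ℝ → ℝ, C21 φ → ∀ ε > (0:ℝ),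
    (∀ x ∈ closure Ω, ∀ t ∈ Icc (0:ℝ) T,
      deriv (φ x) t +
        F (hessAt (fun y => φ y t) x) (gradAt (fun y => φ y t) x) (φ x t) x t ≤ -ε) →
    ¬ ∃ p ∈ Ω ×ˢ Ioc (0:ℝ) T,
        IsLocalMinOn (fun q : Eucl d × ℝ => u q - φ q.1 q.2) (Ω ×ˢ Ioc (0:ℝ) T) p ∧
        u p - φ p.1 p.2 = 0


lemma pucciMinus_zero {d : ℕ} (lam Lam : ℝ) :
    pucciMinus lam Lam (0 : Matrix (Fin d) (Fin d) ℝ) = 0 := by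
  have h : eigs (0 : Matrix (Fin d) (Fin d) ℝ) = 0 := by
    unfold eigs
    rw [dif_pos Matrix.isHermitian_zero]
    exact (Matrix.IsHermitian.eigenvalues_eq_zero_iff _).2 rfl
  simp [pucciMinus, posPartTrace, negPartTrace, h]

lemma hessAt_zero {d : ℕ} (x : Eucl d) : hessAt (fun _ => (0 : ℝ)) x = 0 := by
  ext i j
  simp [hessAt]

lemma gradAt_zero {d : ℕ} (x : Eucl d) : gradAt (fun _ => (0 : ℝ)) x = 0 := by
  ext i
  simp [gradAt]

/-- The structure condition forces monotonicity in the zeroth-order variable, since the modulus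
enters only through the positive part of the difference. -/
lemma StructureCondition.mono {d : ℕ} {lam Lam gam : ℝ} {ω : ℝ → ℝ → ℝ}
    {X : Set (Eucl d)} {Tset : Set ℝ}
    {F : Matrix (Fin d) (Fin d) ℝ → Eucl d → ℝ → Eucl d → ℝ → ℝ}
    (hF : StructureCondition lam Lam gam ω X Tset F) {r s : ℝ} (hsr : s ≤ r)
    {x : Eucl d} (hx : x ∈ X) {t : ℝ} (ht : t ∈ Tset) :
    F 0 0 s x t ≤ F 0 0 r x t := by
  have hR : 0 < |r| + |s| + 1 := by positivity
  have h := (hF.2 _ hR 0 0 (by simp) (by simp) 0 0 r s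
    (by linarith [abs_nonneg s]) (by linarith [abs_nonneg r]) x hx t ht).1
  rw [sub_self, pucciMinus_zero, max_eq_right (by linarith), (hF.1 _ hR).2.2] at h
  simp at h
  linarith

/-- A function continuous on `closure Ω`, vanishing on the frontier and positive somewhere on
`closure Ω`, has its maximum over `closure Ω` at a point of `Ω`. -/
lemma exists_interior_max {d : ℕ} {Ω : Set (Eucl d)} (hΩopen : IsOpen Ω)
    (hΩbdd : Bornology.IsBounded Ω) {z : Eucl d → ℝ} (hz : ContinuousOn z (closure Ω))
    (hz0 : ∀ x ∈ frontier Ω, z x = 0) {x : Eucl d} (hx : x ∈ closure Ω) (hpos : 0 < z x) :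
    ∃ x₀ ∈ Ω, z x ≤ z x₀ ∧ IsLocalMax z x₀ := by
  obtain ⟨x₀, hx₀, hmax⟩ := hΩbdd.isCompact_closure.exists_isMaxOn ⟨x, hx⟩ hz
  have hle : z x ≤ z x₀ := hmax hx
  have hmem : x₀ ∈ Ω := by
    by_contra hn
    have : z x₀ = 0 := hz0 x₀ ⟨hx₀, by rwa [hΩopen.interior_eq]⟩
    linarith
  refine ⟨x₀, hmem, hle, ?_⟩
  filter_upwards [hΩopen.mem_nhds hmem] with y hy
  exact hmax (subset_closure hy)

/-- **First Bound.**  There is a constant `C` depending only on `d, λ, Λ, γ, Ω` (through its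
diameter) and `K`, but not on `h` (nor on `F`, `T`), such that for every `h ∈ (0,1]` any
continuous viscosity solution `z` of `F(D²z, Dz, z, x, h) + z/h = 0` in `Ω` with `z = 0` on
`∂Ω` satisfies `‖z‖_{L^∞(Ω)} ≤ C`. -/
theorem first_bound (d : ℕ) (lam Lam gam K : ℝ)
    (hlam : 0 < lam) (hlL : lam ≤ Lam) (hgam : 0 ≤ gam) (hK : 0 ≤ K)
    (Ω : Set (Eucl d)) (hΩopen : IsOpen Ω) (hΩbdd : Bornology.IsBounded Ω) :
    ∃ C : ℝ, ∀ T > (0:ℝ),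
      ∀ F : Matrix (Fin d) (Fin d) ℝ → Eucl d → ℝ → Eucl d → ℝ → ℝ, ∀ ω : ℝ → ℝ → ℝ,
        ContinuousOn
          (fun q : Matrix (Fin d) (Fin d) ℝ × Eucl d × ℝ × Eucl d × ℝ =>
            F q.1 q.2.1 q.2.2.1 q.2.2.2.1 q.2.2.2.2)
          (univ ×ˢ univ ×ˢ univ ×ˢ closure Ω ×ˢ Icc 0 T) →
        UniformlyElliptic lam Lam (closure Ω) (Icc 0 T) F →
        StructureCondition lam Lam gam ω (closure Ω) (Icc 0 T) F →
        (∀ x ∈ closure Ω, ∀ t ∈ Icc (0:ℝ) T, |F 0 0 0 x t| ≤ K) →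
        ∀ h : ℝ, h ∈ Ioc (0:ℝ) 1 → h ≤ T →
          ∀ z : Eucl d → ℝ, ContinuousOn z (closure Ω) →
            ViscSol Ω (fun M P r x => F M P r x h + r / h) (fun _ => 0) z →
            (∀ x ∈ frontier Ω, z x = 0) →
            ∀ x ∈ closure Ω, |z x| ≤ C := by
  refine ⟨K, ?_⟩
  intro T hT F ω _ _ hF hFK h hh hhT z hz hsol hz0 x hx
  have ht : h ∈ Icc (0:ℝ) T := ⟨hh.1.le, hhT⟩
  rw [abs_le]
  constructor
  · by_contra! hlt
    obtain ⟨x₀, hx₀, hle, hmax⟩ := exists_interior_max hΩopen hΩbdd hz.neg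
      (fun y hy => by simp [hz0 y hy]) hx (by simp only [Pi.neg_apply]; linarith)
    simp only [Pi.neg_apply] at hle
    have hcl := subset_closure hx₀
    have hv := hsol.2 x₀ hx₀ (fun _ => 0) contDiffAt_const (by simpa using hmax.neg)
    rw [hessAt_zero, gradAt_zero] at hv
    have hm := hF.mono (show z x₀ ≤ 0 by linarith) hcl ht
    have hb := (abs_le.1 (hFK x₀ hcl h ht)).2
    have hd : z x₀ / h ≤ z x₀ := by
      rw [div_le_iff₀ hh.1]
      nlinarith [hh.2]
    linarith
  · by_contra! hlt
    obtain ⟨x₀, hx₀, hle, hmax⟩ := exists_interior_max hΩopen hΩbdd hz hz0 hx (by linarith)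
    have hcl := subset_closure hx₀
    have hv := hsol.1 x₀ hx₀ (fun _ => 0) contDiffAt_const (by simpa using hmax)
    rw [hessAt_zero, gradAt_zero] at hv
    have hm := hF.mono (show 0 ≤ z x₀ by linarith) hcl ht
    have hb := (abs_le.1 (hFK x₀ hcl h ht)).1
    have hd : z x₀ ≤ z x₀ / h := by
      rw [le_div_iff₀ hh.1]
      nlinarith [hh.2]
    linarith

end
end

section
/- Let Ω ⊂ ℝⁿ be a bounded open set, let u : Ω̄ → ℝ be continuous, and let ε > 0. Then for Lebesgue-almost every x ∈ Ω there exist a vector p ∈ ℝⁿ and a symmetric matrix M^ε(x) such that u^ε(y) = u^ε(x) + ⟨p, y-x⟩ + (1/2)⟨M^ε(x)(y-x), y-x⟩ + o(|y-x|²) as y → x, and moreover M^ε(x) ≥ -(1/ε)I in the sense of symmetric matrices. Similarly, for almost every x ∈ Ω the inf-convolution u_ε admits such a second-order expansion with a symmetric matrix M_ε(x) satisfying M_ε(x) ≤ (1/ε)I. -/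
/-!
Up to the quadratic `|x|² / (2ε)`, the sup-convolution is a supremum of affine functions with
slopes `y / ε`, `y ∈ closure Ω`, so `f = u^ε + |·|² / (2ε)` is Lipschitz and has a subgradient
at every point (`exists_subgrad_supConv`). The theorem is thus Alexandrov's theorem for `f`,
proved here through the resolvent of its subdifferential.

By monotonicity of `∂f`, the resolvent `J = (1 + ∂f)⁻¹` is a 1-Lipschitz map from the range of
`1 + ∂f` onto the whole space. By Rademacher's theorem and Sard's lemma, almost every `x` is of
the form `J z` with `J` differentiable at `z` and `DJ z` invertible. Inverting to first order,
`∂f` is single-valued at `x` and every subgradient at `y` near `x` is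
`p + A (y - x) + o(|y - x|)` with `A = (DJ z)⁻¹ - 1` (`exists_subgrad_deriv`). Summing the
subgradient inequalities along fine partitions of the segment `[x, y]` gives the second-order
expansion of `f` with quadratic form `⟪A v, v⟫` (`expansion_of_subgrad_close`). Only the symmetric
part of `A` enters, so its symmetry need not be known; the form is nonnegative because `p` is a
subgradient (`quadratic_nonneg`). Subtracting `|x|² / (2ε)` shifts the matrix by `-(1/ε) I`, and
the inf-convolution of `u` is minus the sup-convolution of `-u`.
-/

open scoped RealInnerProductSpace
open MeasureTheory Filter Topology Asymptotics Metric Set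

noncomputable section

/-- `HasSecondOrderExpansionAt f x p M` means
`f(y) = f(x) + ⟨p, y-x⟩ + ½⟨M(y-x), y-x⟩ + o(|y-x|²)` as `y → x`. -/
def HasSecondOrderExpansionAt {d : ℕ} (f : Eucl d → ℝ) (x : Eucl d)
    (p : Eucl d) (M : Matrix (Fin d) (Fin d) ℝ) : Prop :=
  (fun y => f y - (f x + ⟪p, y - x⟫ + (1 / 2) * quadForm M (y - x)))
    =o[nhds x] fun y => ‖y - x‖ ^ 2

/-! ### Subgradients and Alexandrov's theorem -/

/-- `η` is a subgradient of `f` at `x`: the affine function through `(x, f x)` with slope `η`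
lies globally below `f`. -/
def IsSubgrad {E : Type*} [NormedAddCommGroup E] [InnerProductSpace ℝ E]
    (f : E → ℝ) (x η : E) : Prop :=
  ∀ y, f x + ⟪η, y - x⟫ ≤ f y

section Alexandrov

variable {E : Type*} [NormedAddCommGroup E] [InnerProductSpace ℝ E]

lemma IsSubgrad.monotone {f : E → ℝ} {x y η ζ : E} (hx : IsSubgrad f x η)
    (hy : IsSubgrad f y ζ) : 0 ≤ ⟪η - ζ, x - y⟫ := by
  have h1 := hx y
  have h2 := hy x
  have h3 : ⟪η, y - x⟫ = -⟪η, x - y⟫ := by rw [← inner_neg_right, neg_sub]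
  rw [inner_sub_left]
  linarith

lemma IsSubgrad.norm_le {f : E → ℝ} {C : ℝ} (hC0 : 0 ≤ C)
    (hC : ∀ x y, |f x - f y| ≤ C * ‖x - y‖) {x η : E} (hx : IsSubgrad f x η) : ‖η‖ ≤ C := by
  have h1 := hx (x + η)
  have h2 := (abs_le.1 (hC (x + η) x)).2
  rw [add_sub_cancel_left, real_inner_self_eq_norm_sq] at h1
  rw [add_sub_cancel_left] at h2
  by_contra! h
  have h3 : 0 < ‖η‖ := hC0.trans_lt h
  nlinarith

/-- The resolvent `(1 + ∂f)⁻¹` is nonexpansive: this is monotonicity of `∂f`. -/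
lemma IsSubgrad.norm_sub_le {f : E → ℝ} {x y w z : E} (hx : IsSubgrad f x (w - x))
    (hy : IsSubgrad f y (z - y)) : ‖x - y‖ ≤ ‖w - z‖ := by
  have h := hx.monotone hy
  have h1 : w - x - (z - y) = (w - z) - (x - y) := by abel
  rw [h1, inner_sub_left, real_inner_self_eq_norm_sq] at h
  have h2 := real_inner_le_norm (w - z) (x - y)
  by_contra! h3
  have := norm_nonneg (w - z)
  nlinarith

lemma IsSubgrad.convex {f : E → ℝ} {x η ζ : E} (h : IsSubgrad f x η) (h' : IsSubgrad f x ζ)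
    {t : ℝ} (ht0 : 0 ≤ t) (ht1 : t ≤ 1) : IsSubgrad f x (η + t • (ζ - η)) := by
  intro y
  have h1 := h y
  have h2 := h' y
  rw [inner_add_left, inner_smul_left, inner_sub_left]
  simp only [conj_trivial]
  nlinarith

/-- Telescoping over a fine partition: a one-sided increment bound with a quadratic error
integrates to a bound without error. -/
lemma sub_le_of_increment_le {φ : ℝ → ℝ} {c K : ℝ}
    (h : ∀ s t, 0 ≤ s → s ≤ t → t ≤ 1 → φ t - φ s ≤ (t - s) * c + K * (t - s) ^ 2) :
    φ 1 - φ 0 ≤ c := by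
  have key : ∀ N : ℕ, φ 1 - φ 0 ≤ c + K * (1 / ((N : ℝ) + 1)) := by
    intro N
    have hN : (0 : ℝ) < (N : ℝ) + 1 := by positivity
    have tele := Finset.sum_range_sub (fun k : ℕ => φ ((k : ℝ) / ((N : ℝ) + 1))) (N + 1)
    have e1 : ((N + 1 : ℕ) : ℝ) / ((N : ℝ) + 1) = 1 := by
      push_cast; exact div_self hN.ne'
    simp only [e1, Nat.cast_zero, zero_div] at tele
    rw [← tele]
    have : ∀ k ∈ Finset.range (N + 1),
        φ (((k + 1 : ℕ) : ℝ) / ((N : ℝ) + 1)) - φ ((k : ℝ) / ((N : ℝ) + 1))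
          ≤ (1 / ((N : ℝ) + 1)) * c + K * (1 / ((N : ℝ) + 1)) ^ 2 := by
      intro k hk
      have hk' : (k : ℝ) + 1 ≤ (N : ℝ) + 1 := by
        have := Finset.mem_range.1 hk
        exact_mod_cast this
      have h1 := h ((k : ℝ) / ((N : ℝ) + 1)) (((k + 1 : ℕ) : ℝ) / ((N : ℝ) + 1))
        (by positivity) (by push_cast; gcongr; linarith)
        (by push_cast; exact (div_le_one hN).2 hk')
      have e2 : ((k + 1 : ℕ) : ℝ) / ((N : ℝ) + 1) - (k : ℝ) / ((N : ℝ) + 1)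
          = 1 / ((N : ℝ) + 1) := by push_cast; ring
      rwa [e2] at h1
    refine (Finset.sum_le_sum this).trans (le_of_eq ?_)
    rw [Finset.sum_const, Finset.card_range, nsmul_eq_mul]
    push_cast
    field_simp
  have lim : Tendsto (fun N : ℕ => c + K * (1 / ((N : ℝ) + 1))) atTop (𝓝 (c + K * 0)) :=
    (tendsto_one_div_add_atTop_nhds_zero_nat.const_mul K).const_add c
  have := ge_of_tendsto' lim key
  simpa using this

/-- If the subgradients of `f` on the segment `[x, x + h]` agree with `p + s • A h` up to `δ`,
then `f` is second-order close to the corresponding quadratic at `x + h`. -/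
lemma expansion_of_subgrad_close {f : E → ℝ} {x h p : E} {A : E →L[ℝ] E} {δ : ℝ}
    (H : ∀ s : ℝ, 0 ≤ s → s ≤ 1 → ∃ η, IsSubgrad f (x + s • h) η ∧ ‖η - p - s • A h‖ ≤ δ) :
    |f (x + h) - (f x + ⟪p, h⟫ + 1 / 2 * ⟪A h, h⟫)| ≤ δ * ‖h‖ := by
  have bd : ∀ s : ℝ, 0 ≤ s → s ≤ 1 → ∃ η, IsSubgrad f (x + s • h) η ∧
      |⟪η, h⟫ - ⟪p, h⟫ - s * ⟪A h, h⟫| ≤ δ * ‖h‖ := by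
    intro s h0 h1
    obtain ⟨η, h2, h3⟩ := H s h0 h1
    refine ⟨η, h2, ?_⟩
    have e : ⟪η, h⟫ - ⟪p, h⟫ - s * ⟪A h, h⟫ = ⟪η - p - s • A h, h⟫ := by
      rw [inner_sub_left, inner_sub_left, inner_smul_left]; simp
    rw [e]
    exact (abs_real_inner_le_norm _ _).trans (by gcongr)
  have inc : ∀ (s t : ℝ) (η : E), ⟪η, (x + t • h) - (x + s • h)⟫ = (t - s) * ⟪η, h⟫ := by
    intro s t η
    have : (x + t • h) - (x + s • h) = (t - s) • h := by rw [sub_smul]; abel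
    rw [this, inner_smul_right]
  set a := ⟪p, h⟫
  set b := ⟪A h, h⟫
  let G : ℝ → ℝ := fun t => f (x + t • h) - t * a - t ^ 2 / 2 * b
  have up : G 1 - G 0 ≤ δ * ‖h‖ := by
    refine sub_le_of_increment_le (K := b / 2) fun s t h0 hst h1 => ?_
    obtain ⟨η, h2, h3⟩ := bd t (h0.trans hst) h1
    have h4 := h2 (x + s • h)
    rw [inc] at h4
    have h5 := mul_le_mul_of_nonneg_left (abs_le.1 h3).2 (sub_nonneg.2 hst)
    simp only [G]
    nlinarith
  have lo : (-G) 1 - (-G) 0 ≤ δ * ‖h‖ := by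
    refine sub_le_of_increment_le (K := b / 2) fun s t h0 hst h1 => ?_
    obtain ⟨η, h2, h3⟩ := bd s h0 (hst.trans h1)
    have h4 := h2 (x + t • h)
    rw [inc] at h4
    have h5 := mul_le_mul_of_nonneg_left (abs_le.1 h3).1 (sub_nonneg.2 hst)
    simp only [G, Pi.neg_apply]
    nlinarith
  simp only [G, Pi.neg_apply, one_smul, zero_smul, add_zero] at up lo
  rw [abs_le]
  constructor <;> linarith

lemma addHaar_image_eq_zero_of_lipschitzOnWith [FiniteDimensional ℝ E] [MeasurableSpace E]
    [BorelSpace E] (μ : Measure E) [μ.IsAddHaarMeasure] {K : NNReal} {g : E → E} {s : Set E}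
    (hg : LipschitzOnWith K g s) (hs : μ s = 0) : μ (g '' s) = 0 := by
  have e := Measure.isAddLeftInvariant_eq_smul (Measure.hausdorffMeasure (Module.finrank ℝ E)) μ
  have e' := Measure.isAddLeftInvariant_eq_smul μ
    (Measure.hausdorffMeasure (Module.finrank ℝ E) : Measure E)
  have h1 : (Measure.hausdorffMeasure (Module.finrank ℝ E) : Measure E) s = 0 := by
    rw [e]; simp [hs]
  have h2 := hg.hausdorffMeasure_image_le (d := Module.finrank ℝ E) (by positivity)
  rw [h1, mul_zero] at h2
  rw [e']
  simp [le_antisymm h2 (zero_le)]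

lemma isClosed_isSubgrad {f : E → ℝ} (hf : Continuous f) :
    IsClosed {q : E × E | IsSubgrad f q.1 q.2} := by
  have : {q : E × E | IsSubgrad f q.1 q.2}
      = ⋂ y, {q : E × E | f q.1 + ⟪q.2, y - q.1⟫ ≤ f y} := by
    ext q; simp [IsSubgrad]
  rw [this]
  exact isClosed_iInter fun y => isClosed_le (by fun_prop) continuous_const

/-- Outer semicontinuity of the subdifferential at a point where it is a singleton. -/
lemma eventually_subgrad_close [FiniteDimensional ℝ E] {f : E → ℝ} {C : ℝ} (hC0 : 0 ≤ C)
    (hf : Continuous f) (hC : ∀ x y, |f x - f y| ≤ C * ‖x - y‖) {x p : E}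
    (huniq : ∀ η, IsSubgrad f x η → η = p) {ρ : ℝ} (hρ : 0 < ρ) :
    ∀ᶠ y in 𝓝 x, ∀ η, IsSubgrad f y η → ‖η - p‖ < ρ := by
  have hK : IsCompact (closedBall (0 : E) C \ ball p ρ) :=
    (isCompact_closedBall 0 C).diff isOpen_ball
  have := hK.eventually_forall_of_forall_eventually (x₀ := x)
    (P := fun y η => ¬ IsSubgrad f y η) (fun η hη => by
      have hx : (x, η) ∈ {q : E × E | IsSubgrad f q.1 q.2}ᶜ := by
        intro h
        have h' : IsSubgrad f x η := h
        apply hη.2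
        rw [huniq η h']
        exact mem_ball_self hρ
      exact (isClosed_isSubgrad hf).isOpen_compl.mem_nhds hx)
  filter_upwards [this] with y hy η hη
  by_contra! h
  refine hy η ⟨?_, ?_⟩ hη
  · simpa using hη.norm_le hC0 hC
  · simpa [dist_eq_norm] using h

/-- Inverse-function step: where the resolvent `J = (1 + ∂f)⁻¹` is differentiable with
invertible derivative `L`, the subdifferential is single-valued and differentiable, with
derivative `L⁻¹ - 1`. -/
lemma exists_subgrad_deriv [FiniteDimensional ℝ E] {f : E → ℝ} {C : ℝ} (hC0 : 0 ≤ C)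
    (hf : Continuous f) (hC : ∀ x y, |f x - f y| ≤ C * ‖x - y‖) {x p : E}
    (hp : IsSubgrad f x p) {J : E → E} (hJ : ∀ y η, IsSubgrad f y η → J (y + η) = y)
    {L : E →L[ℝ] E} (hL : HasFDerivWithinAt J L {w | ∃ y, IsSubgrad f y (w - y)} (x + p))
    (hdet : L.det ≠ 0) :
    ∃ A : E →L[ℝ] E, ∀ δ > 0, ∀ᶠ y in 𝓝 x, ∀ η, IsSubgrad f y η →
      ‖η - p - A (y - x)‖ ≤ δ * ‖y - x‖ := by
  let e := L.toContinuousLinearEquivOfDetNeZero hdet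
  have he : ∀ v, e v = L v := fun v => rfl
  -- A second subgradient `η` would make `J` constant on the segment from `x + p` to `x + η`.
  have huniq : ∀ η, IsSubgrad f x η → η = p := by
    intro η hη
    have hmem : ∀ t ∈ Icc (0 : ℝ) 1, IsSubgrad f x (p + t • (η - p)) :=
      fun t ht => hp.convex hη ht.1 ht.2
    have hc : HasDerivWithinAt (fun t : ℝ => x + p + t • (η - p)) (η - p) (Icc 0 1) 0 := by
      have h1 : HasDerivAt (fun t : ℝ => t • (η - p)) ((1 : ℝ) • (η - p)) 0 :=
        (hasDerivAt_id (0 : ℝ)).smul_const (η - p)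
      rw [one_smul] at h1
      exact (h1.const_add (x + p)).hasDerivWithinAt
    have hmaps : MapsTo (fun t : ℝ => x + p + t • (η - p)) (Icc 0 1)
        {w | ∃ y, IsSubgrad f y (w - y)} := by
      intro t ht
      refine ⟨x, ?_⟩
      have := hmem t ht
      have e1 : x + p + t • (η - p) - x = p + t • (η - p) := by abel
      rwa [e1]
    have hL' : HasFDerivWithinAt J L {w | ∃ y, IsSubgrad f y (w - y)}
        ((fun t : ℝ => x + p + t • (η - p)) 0) := by simpa using hL
    have h1 := hL'.comp_hasDerivWithinAt (0 : ℝ) hc hmaps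
    have h2 : HasDerivWithinAt (J ∘ fun t : ℝ => x + p + t • (η - p)) 0 (Icc 0 1) 0 := by
      refine (hasDerivWithinAt_const (0 : ℝ) (Icc (0 : ℝ) 1) x).congr ?_ ?_
      · intro t ht
        simpa [add_assoc] using hJ _ _ (hmem t ht)
      · simpa using hJ _ _ hp
    have h3 : L (η - p) = 0 :=
      (uniqueDiffOn_Icc (zero_lt_one' ℝ) 0 (by simp)).eq_deriv _ h1 h2
    rw [← he] at h3
    exact sub_eq_zero.1 (e.map_eq_zero_iff.1 h3)
  refine ⟨(e.symm : E →L[ℝ] E) - ContinuousLinearMap.id ℝ E, fun δ hδ => ?_⟩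
  set N : ℝ := ‖(e.symm : E →L[ℝ] E)‖ + 1 with hNdef
  have hN : 0 < N := by positivity
  have hbd : ∀ v, ‖e.symm v‖ ≤ N * ‖v‖ := fun v =>
    ((e.symm : E →L[ℝ] E).le_opNorm v).trans (by gcongr; linarith)
  set δ₁ : ℝ := min (1 / (2 * N)) (δ / (2 * N ^ 2)) with hδ₁
  have hδ₁pos : 0 < δ₁ := by positivity
  have hδ₁a : N * δ₁ ≤ 1 / 2 := by
    calc N * δ₁ ≤ N * (1 / (2 * N)) := by gcongr; exact min_le_left _ _
      _ = 1 / 2 := by field_simp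
  have hδ₁b : 2 * N ^ 2 * δ₁ ≤ δ := by
    calc 2 * N ^ 2 * δ₁ ≤ 2 * N ^ 2 * (δ / (2 * N ^ 2)) := by gcongr; exact min_le_right _ _
      _ = δ := by field_simp
  have hlo := (isLittleO_iff.1 hL.isLittleO) hδ₁pos
  obtain ⟨r, hr, hball⟩ := Metric.mem_nhdsWithin_iff.1 hlo
  filter_upwards [eventually_subgrad_close hC0 hf hC huniq (half_pos hr),
    Metric.ball_mem_nhds x (half_pos hr)] with y hy1 hy2 η hη
  have hw : ‖(y + η) - (x + p)‖ ≤ ‖y - x‖ + ‖η - p‖ := by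
    have : (y + η) - (x + p) = (y - x) + (η - p) := by abel
    rw [this]; exact norm_add_le _ _
  have hy2' : ‖y - x‖ < r / 2 := by simpa [dist_eq_norm] using hy2
  have hmem : y + η ∈ ball (x + p) r ∩ {w | ∃ y, IsSubgrad f y (w - y)} := by
    refine ⟨?_, y, by simpa using hη⟩
    rw [mem_ball, dist_eq_norm]
    linarith [hy1 η hη]
  have h1 : ‖J (y + η) - J (x + p) - L ((y + η) - (x + p))‖
      ≤ δ₁ * ‖(y + η) - (x + p)‖ := hball hmem
  rw [hJ y η hη, hJ x p hp] at h1
  set v := (y + η) - (x + p) with hv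
  have h2 : ‖e.symm (y - x) - v‖ ≤ N * (δ₁ * ‖v‖) := by
    have e1 : e.symm (y - x) - v = e.symm (y - x - L v) := by
      rw [map_sub e.symm (y - x), ← he, e.symm_apply_apply]
    rw [e1]
    exact (hbd _).trans (by gcongr)
  have h3 : ‖v‖ ≤ 2 * N * ‖y - x‖ := by
    have h4 : ‖v‖ ≤ ‖e.symm (y - x)‖ + ‖e.symm (y - x) - v‖ := by
      have := norm_sub_le (e.symm (y - x)) (e.symm (y - x) - v)
      rwa [sub_sub_cancel] at this
    have h5 := hbd (y - x)
    have h6 : N * (δ₁ * ‖v‖) ≤ 1 / 2 * ‖v‖ := by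
      rw [← mul_assoc]; gcongr
    linarith
  have e2 : η - p - ((e.symm : E →L[ℝ] E) - ContinuousLinearMap.id ℝ E) (y - x)
      = -(e.symm (y - x) - v) := by
    simp only [hv, sub_apply, ContinuousLinearMap.id_apply,
      ContinuousLinearEquiv.coe_coe]
    abel
  rw [e2, norm_neg]
  calc ‖e.symm (y - x) - v‖ ≤ N * (δ₁ * ‖v‖) := h2
    _ ≤ N * (δ₁ * (2 * N * ‖y - x‖)) := by gcongr
    _ = (2 * N ^ 2 * δ₁) * ‖y - x‖ := by ring
    _ ≤ δ * ‖y - x‖ := by gcongr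

/-- **Alexandrov's theorem** for Lipschitz functions with everywhere nonempty subdifferential.
The linear map `A` need not be symmetric; only its quadratic form matters. -/
theorem ae_exists_expansion [FiniteDimensional ℝ E] [MeasurableSpace E] [BorelSpace E]
    (μ : Measure E) [μ.IsAddHaarMeasure] {f : E → ℝ} {C : ℝ} (hC0 : 0 ≤ C)
    (hC : ∀ x y, |f x - f y| ≤ C * ‖x - y‖) (hsub : ∀ x, ∃ η, IsSubgrad f x η) :
    ∀ᵐ x ∂μ, ∃ (p : E) (A : E →L[ℝ] E), IsSubgrad f x p ∧
      (fun y => f y - (f x + ⟪p, y - x⟫ + 1 / 2 * ⟪A (y - x), y - x⟫))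
        =o[𝓝 x] fun y => ‖y - x‖ ^ 2 := by
  have hf : Continuous f := by
    have : LipschitzWith C.toNNReal f := LipschitzWith.of_dist_le_mul fun x y => by
      rw [Real.dist_eq, dist_eq_norm, Real.coe_toNNReal C hC0]
      exact hC x y
    exact this.continuous
  set R : Set E := {w | ∃ y, IsSubgrad f y (w - y)} with hR
  choose! J hJR using (fun w (hw : w ∈ R) => hw)
  have hJ : ∀ y η, IsSubgrad f y η → J (y + η) = y := by
    intro y η hη
    have h1 : IsSubgrad f y (y + η - y) := by simpa using hη
    have h2 := (hJR (y + η) ⟨y, h1⟩).norm_sub_le h1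
    rw [sub_self, norm_zero] at h2
    exact sub_eq_zero.1 (norm_le_zero_iff.1 h2)
  have hlip : LipschitzOnWith 1 J R := LipschitzOnWith.of_dist_le_mul fun w hw z hz => by
    rw [dist_eq_norm, dist_eq_norm, NNReal.coe_one, one_mul]
    exact (hJR w hw).norm_sub_le (hJR z hz)
  -- `J` maps the points of non-differentiability to a null set, by Rademacher's theorem.
  have hnull1 : μ (J '' {w | ¬ (w ∈ R → DifferentiableWithinAt ℝ J R w)}) = 0 :=
    addHaar_image_eq_zero_of_lipschitzOnWith μ
      (hlip.mono fun w hw => (Classical.not_imp.1 hw).1)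
      (hlip.ae_differentiableWithinAt_of_mem (μ := μ))
  -- `J` maps its critical points to a null set, by Sard's lemma.
  have hnull2 : μ (J '' {w | w ∈ R ∧ DifferentiableWithinAt ℝ J R w ∧
      (fderivWithin ℝ J R w).det = 0}) = 0 :=
    addHaar_image_eq_zero_of_det_fderivWithin_eq_zero μ (f' := fderivWithin ℝ J R)
      (fun w hw => hw.2.1.hasFDerivWithinAt.mono fun _ h => h.1) (fun w hw => hw.2.2)
  filter_upwards [measure_eq_zero_iff_ae_notMem.1 hnull1,
    measure_eq_zero_iff_ae_notMem.1 hnull2] with x hx1 hx2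
  obtain ⟨p, hp⟩ := hsub x
  have hz : x + p ∈ R := ⟨x, by simpa using hp⟩
  have hdiff : DifferentiableWithinAt ℝ J R (x + p) := by
    by_contra h
    exact hx1 ⟨x + p, fun h' => h (h' hz), hJ x p hp⟩
  have hdet : (fderivWithin ℝ J R (x + p)).det ≠ 0 := fun h =>
    hx2 ⟨x + p, ⟨hz, hdiff, h⟩, hJ x p hp⟩
  obtain ⟨A, hA⟩ := exists_subgrad_deriv hC0 hf hC hp hJ hdiff.hasFDerivWithinAt hdet
  refine ⟨p, A, hp, isLittleO_iff.2 fun δ hδ => ?_⟩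
  obtain ⟨r, hr, hball⟩ := Metric.eventually_nhds_iff_ball.1 (hA δ hδ)
  filter_upwards [Metric.ball_mem_nhds x hr] with y hy
  rw [mem_ball, dist_eq_norm] at hy
  have key := expansion_of_subgrad_close (f := f) (x := x) (h := y - x) (p := p) (A := A)
    (δ := δ * ‖y - x‖) (fun s hs0 hs1 => by
      obtain ⟨η, hη⟩ := hsub (x + s • (y - x))
      have hs : ‖s • (y - x)‖ ≤ ‖y - x‖ := by
        rw [norm_smul, Real.norm_of_nonneg hs0]
        exact mul_le_of_le_one_left (norm_nonneg _) hs1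
      have h1 := hball (x + s • (y - x))
        (by rw [mem_ball, dist_eq_norm, add_sub_cancel_left]; exact hs.trans_lt hy) η hη
      rw [add_sub_cancel_left, map_smul] at h1
      exact ⟨η, hη, h1.trans (by gcongr)⟩)
  rw [add_sub_cancel] at key
  rw [Real.norm_eq_abs, Real.norm_of_nonneg (by positivity), pow_two, ← mul_assoc]
  exact key

/-- A subgradient in the linear term forces the quadratic term to be nonnegative. -/
lemma quadratic_nonneg {f : E → ℝ} {x p : E} {A : E →L[ℝ] E} (hp : IsSubgrad f x p)
    (h : (fun y => f y - (f x + ⟪p, y - x⟫ + 1 / 2 * ⟪A (y - x), y - x⟫))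
        =o[𝓝 x] fun y => ‖y - x‖ ^ 2) (v : E) : 0 ≤ ⟪A v, v⟫ := by
  have key : ∀ c > 0, -(2 * c * ‖v‖ ^ 2) ≤ ⟪A v, v⟫ := by
    intro c hc
    have hlim : Tendsto (fun t : ℝ => x + t • v) (𝓝[>] 0) (𝓝 x) := by
      have : Continuous fun t : ℝ => x + t • v := by fun_prop
      simpa using (this.tendsto 0).mono_left nhdsWithin_le_nhds
    obtain ⟨t, h1, ht⟩ := ((hlim.eventually (isLittleO_iff.1 h hc)).and
      self_mem_nhdsWithin).exists
    have ht : 0 < t := ht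
    have h2 := hp (x + t • v)
    rw [Real.norm_eq_abs, Real.norm_of_nonneg (by positivity)] at h1
    have h3 := (abs_le.1 h1).2
    simp only [add_sub_cancel_left, map_smul, inner_smul_left, inner_smul_right, norm_smul,
      Real.norm_of_nonneg ht.le, conj_trivial] at h2 h3
    have h4 : 0 ≤ t ^ 2 * (⟪A v, v⟫ + 2 * c * ‖v‖ ^ 2) := by nlinarith
    have := nonneg_of_mul_nonneg_right h4 (by positivity)
    linarith
  have lim : Tendsto (fun c : ℝ => -(2 * c * ‖v‖ ^ 2)) (𝓝[>] 0) (𝓝 0) := by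
    have : Continuous fun c : ℝ => -(2 * c * ‖v‖ ^ 2) := by fun_prop
    simpa using (this.tendsto 0).mono_left nhdsWithin_le_nhds
  exact le_of_tendsto lim (by filter_upwards [self_mem_nhdsWithin] with c hc using key c hc)

end Alexandrov

/-! ### Sup- and inf-convolutions -/

section Convolution

variable {d : ℕ}

lemma quadForm_add (M N : Matrix (Fin d) (Fin d) ℝ) (v : Eucl d) :
    quadForm (M + N) v = quadForm M v + quadForm N v := by
  simp only [quadForm, Matrix.add_apply, add_mul, Finset.sum_add_distrib]

lemma quadForm_smul (c : ℝ) (M : Matrix (Fin d) (Fin d) ℝ) (v : Eucl d) :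
    quadForm (c • M) v = c * quadForm M v := by
  simp only [quadForm, Matrix.smul_apply, smul_eq_mul, Finset.mul_sum, mul_assoc]

lemma quadForm_transpose (M : Matrix (Fin d) (Fin d) ℝ) (v : Eucl d) :
    quadForm M.transpose v = quadForm M v := by
  simp only [quadForm, Matrix.transpose_apply]
  rw [Finset.sum_comm]
  exact Finset.sum_congr rfl fun i _ => Finset.sum_congr rfl fun j _ => by ring

lemma quadForm_one (v : Eucl d) : quadForm 1 v = ‖v‖ ^ 2 := by
  rw [EuclideanSpace.norm_sq_eq]
  simp [quadForm, Matrix.one_apply, pow_two]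

lemma exists_matrix_quadForm (A : Eucl d →L[ℝ] Eucl d) :
    ∃ S : Matrix (Fin d) (Fin d) ℝ, S.IsSymm ∧ ∀ v, quadForm S v = ⟪A v, v⟫ := by
  let B : Matrix (Fin d) (Fin d) ℝ := Matrix.of fun i j => A (EuclideanSpace.single j 1) i
  have hB : ∀ v, quadForm B v = ⟪A v, v⟫ := by
    intro v
    have hv : A v = ∑ j, v j • A (EuclideanSpace.single j 1) := by
      conv_lhs => rw [← (EuclideanSpace.basisFun (Fin d) ℝ).sum_repr v]
      simp [map_sum]
    rw [hv, sum_inner, quadForm, Finset.sum_comm]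
    refine Finset.sum_congr rfl fun j _ => ?_
    rw [inner_smul_left, PiLp.inner_apply, Finset.mul_sum]
    refine Finset.sum_congr rfl fun i _ => ?_
    simp [B]
    ring
  refine ⟨(1 / 2 : ℝ) • (B + B.transpose), ?_, fun v => ?_⟩
  · ext i j
    simp
    ring
  · rw [quadForm_smul, quadForm_add, quadForm_transpose, hB]
    ring

lemma posSemidef_of_quadForm_nonneg {S : Matrix (Fin d) (Fin d) ℝ} (hS : S.IsSymm)
    (h : ∀ v, 0 ≤ quadForm S v) : S.PosSemidef := by
  refine Matrix.PosSemidef.of_dotProduct_mulVec_nonneg ?_ fun x => ?_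
  · rw [Matrix.IsHermitian, Matrix.conjTranspose_eq_transpose_of_trivial]
    exact hS
  · have := h (WithLp.toLp 2 x)
    refine this.trans (le_of_eq ?_)
    simp only [quadForm, dotProduct, Matrix.mulVec, Finset.mul_sum, star_trivial]
    exact Finset.sum_congr rfl fun i _ => Finset.sum_congr rfl fun j _ => by ring

/-- A maximiser `y` in the sup-convolution at `x` gives the subgradient `y / ε` at `x` of the
convex function `u^ε + |·|² / (2ε)`. -/
lemma exists_subgrad_supConv {Ω : Set (Eucl d)} (hne : Ω.Nonempty)
    (hΩbdd : Bornology.IsBounded Ω) {u : Eucl d → ℝ} (hu : ContinuousOn u (closure Ω))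
    {ε : ℝ} (hε : 0 < ε) (x : Eucl d) :
    ∃ y ∈ closure Ω, IsSubgrad (fun x => supConv Ω u ε x + ‖x‖ ^ 2 / (2 * ε)) x (ε⁻¹ • y) := by
  have hK : IsCompact (closure Ω) := hΩbdd.isCompact_closure
  have hcont : ∀ x : Eucl d,
      ContinuousOn (fun y => u y - ‖x - y‖ ^ 2 / (2 * ε)) (closure Ω) := fun x =>
    hu.sub (by fun_prop)
  obtain ⟨y, hy, hmax⟩ := hK.exists_sSup_image_eq hne.closure (hcont x)
  refine ⟨y, hy, fun z => ?_⟩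
  have hz : u y - ‖z - y‖ ^ 2 / (2 * ε) ≤ supConv Ω u ε z :=
    le_csSup (hK.bddAbove_image (hcont z)) ⟨y, hy, rfl⟩
  have hx : supConv Ω u ε x = u y - ‖x - y‖ ^ 2 / (2 * ε) := hmax
  have h1 := norm_sub_sq_real z y
  have h2 := norm_sub_sq_real x y
  have h3 : ⟪ε⁻¹ • y, z - x⟫ = (2 * ⟪z, y⟫ - 2 * ⟪x, y⟫) / (2 * ε) := by
    rw [inner_smul_left, inner_sub_right, real_inner_comm, real_inner_comm y x]
    simp
    field_simp
  rw [h1] at hz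
  simp only [hx, h3]
  rw [h2]
  have : u y - (‖x‖ ^ 2 - 2 * ⟪x, y⟫ + ‖y‖ ^ 2) / (2 * ε) + ‖x‖ ^ 2 / (2 * ε)
      + (2 * ⟪z, y⟫ - 2 * ⟪x, y⟫) / (2 * ε)
      = u y - (‖z‖ ^ 2 - 2 * ⟪z, y⟫ + ‖y‖ ^ 2) / (2 * ε) + ‖z‖ ^ 2 / (2 * ε) := by ring
  linarith

lemma supConv_ae_expansion {Ω : Set (Eucl d)} (hne : Ω.Nonempty)
    (hΩbdd : Bornology.IsBounded Ω) {u : Eucl d → ℝ} (hu : ContinuousOn u (closure Ω))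
    {ε : ℝ} (hε : 0 < ε) :
    ∀ᵐ x ∂(volume : Measure (Eucl d)),
      ∃ (p : Eucl d) (M : Matrix (Fin d) (Fin d) ℝ), M.IsSymm ∧
          HasSecondOrderExpansionAt (supConv Ω u ε) x p M ∧
          (M + (1 / ε) • (1 : Matrix (Fin d) (Fin d) ℝ)).PosSemidef := by
  obtain ⟨B, hBpos, hB⟩ := hΩbdd.closure.exists_pos_norm_le
  have hsub := exists_subgrad_supConv hne hΩbdd hu hε
  set f : Eucl d → ℝ := fun x => supConv Ω u ε x + ‖x‖ ^ 2 / (2 * ε) with hf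
  have hle : ∀ x y, f x - f y ≤ ε⁻¹ * B * ‖x - y‖ := by
    intro x y
    obtain ⟨w, hw, h⟩ := hsub x
    have h1 := h y
    have h2 : -⟪ε⁻¹ • w, y - x⟫ ≤ ε⁻¹ * B * ‖x - y‖ := by
      rw [← inner_neg_right, neg_sub]
      refine (real_inner_le_norm _ _).trans ?_
      rw [norm_smul, Real.norm_of_nonneg (by positivity)]
      gcongr
      exact hB w hw
    linarith
  have hC : ∀ x y, |f x - f y| ≤ ε⁻¹ * B * ‖x - y‖ := by
    intro x y
    rw [abs_le]
    refine ⟨?_, hle x y⟩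
    have := hle y x
    rw [norm_sub_rev] at this
    linarith
  filter_upwards [ae_exists_expansion (volume : Measure (Eucl d)) (by positivity) hC
    (fun x => let ⟨y, _, h⟩ := hsub x; ⟨_, h⟩)] with x hx
  obtain ⟨p, A, hp, hexp⟩ := hx
  obtain ⟨S, hS, hSA⟩ := exists_matrix_quadForm A
  refine ⟨p - ε⁻¹ • x, S + (-(1 / ε)) • 1, ?_, ?_, ?_⟩
  · exact hS.add (Matrix.isSymm_one.smul _)
  · refine hexp.congr_left fun y => ?_
    rw [quadForm_add, quadForm_smul, quadForm_one, hSA, inner_sub_left, inner_smul_left]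
    have h1 : ‖y‖ ^ 2 = ‖x‖ ^ 2 + 2 * ⟪x, y - x⟫ + ‖y - x‖ ^ 2 := by
      rw [← norm_add_sq_real, add_sub_cancel]
    simp only [hf, h1, conj_trivial]
    field_simp
    ring
  · have e : S + (-(1 / ε)) • (1 : Matrix (Fin d) (Fin d) ℝ) + (1 / ε) • 1 = S := by
      rw [add_assoc, ← add_smul]; simp
    rw [e]
    exact posSemidef_of_quadForm_nonneg hS fun v => by
      rw [hSA]; exact quadratic_nonneg hp hexp v

lemma infConv_eq_neg_supConv (Ω : Set (Eucl d)) (u : Eucl d → ℝ) (ε : ℝ) (x : Eucl d) :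
    infConv Ω u ε x = -supConv Ω (-u) ε x := by
  rw [infConv, supConv, Real.sInf_def, ← Set.image_neg_eq_neg, Set.image_image]
  congr 3
  ext y
  simp only [Pi.neg_apply]
  ring

end Convolution

/-- **Almost-everywhere second-order expansions of sup- and inf-convolutions.**  For `u`
continuous on the closure of a bounded open `Ω` and `ε > 0`, for a.e. `x ∈ Ω` the
sup-convolution `u^ε` admits a second-order expansion with a symmetric matrix
`M^ε(x) ≥ -(1/ε)I`, and the inf-convolution `u_ε` admits one with a symmetric matrix
`M_ε(x) ≤ (1/ε)I`. -/
theorem supConv_ae_second_order_expansion (d : ℕ) (Ω : Set (Eucl d))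
    (hΩopen : IsOpen Ω) (hΩbdd : Bornology.IsBounded Ω)
    (u : Eucl d → ℝ) (hu : ContinuousOn u (closure Ω)) (ε : ℝ) (hε : 0 < ε) :
    ∀ᵐ x ∂(volume : Measure (Eucl d)), x ∈ Ω →
      (∃ (p : Eucl d) (M : Matrix (Fin d) (Fin d) ℝ), M.IsSymm ∧
          HasSecondOrderExpansionAt (supConv Ω u ε) x p M ∧
          (M + (1 / ε) • (1 : Matrix (Fin d) (Fin d) ℝ)).PosSemidef) ∧
      (∃ (p : Eucl d) (M : Matrix (Fin d) (Fin d) ℝ), M.IsSymm ∧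
          HasSecondOrderExpansionAt (infConv Ω u ε) x p M ∧
          ((1 / ε) • (1 : Matrix (Fin d) (Fin d) ℝ) - M).PosSemidef) := by
  rcases Ω.eq_empty_or_nonempty with rfl | hne
  · simp
  filter_upwards [supConv_ae_expansion hne hΩbdd hu hε,
    supConv_ae_expansion hne hΩbdd hu.neg hε] with x hx1 hx2 _
  refine ⟨hx1, ?_⟩
  obtain ⟨p, M, hM, hexp, hpos⟩ := hx2
  refine ⟨-p, -M, hM.neg, ?_, ?_⟩
  · refine hexp.neg_left.congr_left fun y => ?_
    have h1 : quadForm (-M) (y - x) = -quadForm M (y - x) := by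
      rw [← neg_one_smul ℝ M, quadForm_smul]; ring
    rw [h1, infConv_eq_neg_supConv, infConv_eq_neg_supConv, inner_neg_left]
    ring
  · rwa [sub_neg_eq_add, add_comm]

end
end

section
/- Let φ : ℝⁿ → ℝ be semiconvex. Then φ is twice differentiable almost everywhere in the sense of Aleksandrov: for Lebesgue-almost every x₀ ∈ ℝⁿ there exist a vector p ∈ ℝⁿ and a symmetric matrix A such that φ(x) = φ(x₀) + ⟨p, x - x₀⟩ + (1/2)⟨A(x - x₀), x - x₀⟩ + o(|x - x₀|²) as x → x₀. -/
/-!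
Adding `c |x|² / 2` reduces the theorem to a convex function `f`, which has a nonempty
subdifferential `∂f x` at every point `x`. The argument transfers Rademacher's theorem from the
proximal map `P = (I + ∂f)⁻¹` to the subdifferential.

Minimising `f + |· - y|² / 2` shows that `P` is defined everywhere
(`exists_isSubgradAt_sub`), and monotonicity of `∂f` makes it firmly nonexpansive, in particular
`1`-Lipschitz. By Rademacher's theorem it is differentiable off a null set, and Lipschitz maps send
null sets to null sets; by Sard's lemma the image of the points with singular derivative is null
too. Hence for almost every `x`, the map `P` is differentiable with invertible derivative
at every `y` with `P y = x` (`LipschitzWith.ae_regular_value`).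

At such an `x`, any selection `g` of `I + ∂f` is a right inverse of `P` and is continuous at `x`
(`IsProx.continuousAt_selection`), so it is differentiable there, and so is the selection
`G = g - I` of `∂f`. Integrating `G` along segments issuing from `x` turns its first order
expansion into the second order expansion of `f` (`isLittleO_of_hasFDerivAt_subgrad`). The
derivative of `G` may be replaced by its symmetric part, which has the same quadratic form.
-/

open scoped RealInnerProductSpace
open MeasureTheory Filter Topology Asymptotics Metric Set

noncomputable section

/-- A function `φ : ℝᵈ → ℝ` is semiconvex if `x ↦ φ(x) + c|x|²/2` is convex for some
`c ≥ 0`. -/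
def Semiconvex {d : ℕ} (φ : Eucl d → ℝ) : Prop :=
  ∃ c : ℝ, 0 ≤ c ∧ ConvexOn ℝ univ fun x => φ x + c * ‖x‖ ^ 2 / 2

section Aleksandrov

variable {E : Type*} [NormedAddCommGroup E] [InnerProductSpace ℝ E]

/-! ### Subgradients and the proximal map -/

/-- `p` is a subgradient at `x` of the everywhere defined function `f`: the affine function with
slope `p` that agrees with `f` at `x` lies below `f` on the whole space. -/
def IsSubgradAt (f : E → ℝ) (x p : E) : Prop :=
  ∀ z, f x + ⟪p, z - x⟫ ≤ f z

/-- Obtained by separating the point `(x, f x)` from the open strict epigraph of `f`. -/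
lemma exists_isSubgradAt [FiniteDimensional ℝ E] {f : E → ℝ} (hf : ConvexOn ℝ univ f) (x : E) :
    ∃ p, IsSubgradAt f x p := by
  have hcont : Continuous f := continuousOn_univ.1 (hf.continuousOn isOpen_univ)
  have hconv : Convex ℝ {q : E × ℝ | f q.1 < q.2} := by
    simpa using hf.convex_strict_epigraph
  have hopen : IsOpen {q : E × ℝ | f q.1 < q.2} :=
    isOpen_lt (hcont.comp continuous_fst) continuous_snd
  obtain ⟨L, hL⟩ := geometric_hahn_banach_open_point (x := (x, f x)) hconv hopen (by simp)
  have hsplit : ∀ (z : E) (t : ℝ), L (z, t) = L (z, 0) + t * L (0, 1) := by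
    intro z t
    have : (z, t) = (z, (0 : ℝ)) + t • ((0 : E), (1 : ℝ)) := by simp
    rw [this, map_add, map_smul, smul_eq_mul]
  -- The separating functional is not vertical: its slope in the last variable is negative.
  have hneg : L (0, 1) < 0 := by
    have := hL (x, f x + 1) (by simp)
    rw [hsplit x (f x + 1), hsplit x (f x)] at this
    linarith
  set a : ℝ := -L (0, 1) with ha
  have ha0 : 0 < a := by linarith
  let l : StrongDual ℝ E := a⁻¹ • L.comp (ContinuousLinearMap.inl ℝ E ℝ)
  refine ⟨(InnerProductSpace.toDual ℝ E).symm l, fun z => ?_⟩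
  rw [InnerProductSpace.toDual_symm_apply]
  have hl : l (z - x) = a⁻¹ * (L (z, 0) - L (x, 0)) := by
    simp [l, ← map_sub]
  refine le_of_forall_pos_le_add fun ε hε => ?_
  have := hL (z, f z + ε) (by simpa using hε)
  rw [hsplit z (f z + ε), hsplit x (f x)] at this
  rw [hl]
  have h2 : L (z, 0) - L (x, 0) ≤ a * (f z + ε - f x) := by rw [ha]; linarith
  have h3 : a⁻¹ * (L (z, 0) - L (x, 0)) ≤ f z + ε - f x := by
    rw [inv_mul_le_iff₀ ha0]; exact h2
  linarith

/-- Surjectivity of `I + ∂f`: a minimiser `x` of `f + ‖· - y‖² / 2` satisfies `y - x ∈ ∂f x`. -/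
lemma exists_isSubgradAt_sub [FiniteDimensional ℝ E] {f : E → ℝ} (hf : ConvexOn ℝ univ f)
    (y : E) : ∃ x, IsSubgradAt f x (y - x) := by
  have hcont : Continuous f := continuousOn_univ.1 (hf.continuousOn isOpen_univ)
  obtain ⟨p, hp⟩ := exists_isSubgradAt hf y
  obtain ⟨x, hx⟩ : ∃ x, ∀ z, f x + ‖x - y‖ ^ 2 / 2 ≤ f z + ‖z - y‖ ^ 2 / 2 := by
    refine Continuous.exists_forall_le' (f := fun z => f z + ‖z - y‖ ^ 2 / 2)
      (by fun_prop) y ?_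
    have : (closedBall y (2 * ‖p‖))ᶜ ∈ cocompact E :=
      (isCompact_closedBall y (2 * ‖p‖)).compl_mem_cocompact
    filter_upwards [this] with z hz
    have hz' : 2 * ‖p‖ < ‖z - y‖ := by simpa [dist_eq_norm] using hz
    have h1 := hp z
    have h2 := (abs_le.1 (abs_real_inner_le_norm p (z - y))).1
    simp only [sub_self, norm_zero]
    nlinarith [norm_nonneg p, norm_nonneg (z - y)]
  refine ⟨x, fun z => ?_⟩
  -- Compare with the competitor `x + t (z - x)` and let `t` tend to zero.
  have key : ∀ t : ℝ, 0 < t → t ≤ 1 →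
      f x + ⟪y - x, z - x⟫ ≤ f z + t * (‖z - x‖ ^ 2 / 2) := by
    intro t ht ht1
    have h1 := hx ((1 - t) • x + t • z)
    have h2 := hf.2 (mem_univ x) (mem_univ z) (sub_nonneg.2 ht1) ht.le (by ring)
    have h3 : (1 - t) • x + t • z - y = (x - y) + t • (z - x) := by module
    rw [h3, norm_add_sq_real, norm_smul, inner_smul_right, mul_pow, Real.norm_eq_abs,
      sq_abs] at h1
    simp only [smul_eq_mul] at h2
    have h4 : ⟪y - x, z - x⟫ = -⟪x - y, z - x⟫ := by rw [← inner_neg_left, neg_sub]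
    rw [h4]
    have h5 : 0 ≤ t * (f z + t * (‖z - x‖ ^ 2 / 2) - f x + ⟪x - y, z - x⟫) := by nlinarith
    have := nonneg_of_mul_nonneg_right h5 ht
    linarith
  have hlim : Tendsto (fun t : ℝ => f z + t * (‖z - x‖ ^ 2 / 2)) (𝓝[>] 0) (𝓝 (f z)) := by
    have : Continuous (fun t : ℝ => f z + t * (‖z - x‖ ^ 2 / 2)) := by fun_prop
    simpa using (this.tendsto 0).mono_left nhdsWithin_le_nhds
  refine ge_of_tendsto hlim ?_
  filter_upwards [Ioc_mem_nhdsGT (zero_lt_one' ℝ)] with t ht using key t ht.1 ht.2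

/-- Monotonicity of the subdifferential, written for `y = x + p` and `y' = x' + p'`: this is the
firm nonexpansiveness of the proximal map. -/
lemma IsSubgradAt.sq_norm_sub_le_inner {f : E → ℝ} {x x' y y' : E}
    (h : IsSubgradAt f x (y - x)) (h' : IsSubgradAt f x' (y' - x')) :
    ‖x' - x‖ ^ 2 ≤ ⟪x' - x, y' - y⟫ := by
  have h1 := h x'
  have h2 := h' x
  have h3 : ⟪y' - x', x - x'⟫ = -⟪x' - x, y' - x'⟫ := by
    rw [real_inner_comm, ← inner_neg_left, neg_sub]
  have h4 : ⟪y - x, x' - x⟫ = ⟪x' - x, y - x⟫ := real_inner_comm _ _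
  have h5 : y' - y = (y' - x') - (y - x) + (x' - x) := by abel
  rw [h5, inner_add_right, inner_sub_right, real_inner_self_eq_norm_sq]
  linarith

/-- `P` is the proximal map `(I + ∂f)⁻¹` of `f`. -/
def IsProx (f : E → ℝ) (P : E → E) : Prop :=
  ∀ y, IsSubgradAt f (P y) (y - P y)

lemma IsProx.eq_of_isSubgradAt {f : E → ℝ} {P : E → E} (hP : IsProx f P) {x p : E}
    (h : IsSubgradAt f x p) : P (x + p) = x := by
  have h' : IsSubgradAt f x (x + p - x) := by simpa using h
  have := h'.sq_norm_sub_le_inner (hP (x + p))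
  rw [sub_self, inner_zero_right] at this
  have h0 : ‖P (x + p) - x‖ = 0 := by nlinarith [norm_nonneg (P (x + p) - x)]
  exact sub_eq_zero.1 (norm_eq_zero.1 h0)

lemma IsProx.lipschitzWith {f : E → ℝ} {P : E → E} (hP : IsProx f P) : LipschitzWith 1 P := by
  refine LipschitzWith.of_dist_le_mul fun a b => ?_
  have h1 := (hP b).sq_norm_sub_le_inner (hP a)
  have h2 := real_inner_le_norm (P a - P b) (a - b)
  rw [dist_eq_norm, dist_eq_norm, NNReal.coe_one, one_mul]
  by_contra! hlt
  nlinarith [norm_nonneg (P a - P b), norm_nonneg (a - b)]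

/-! ### Regular values of Lipschitz maps -/

lemma LipschitzWith.addHaar_image_eq_zero [FiniteDimensional ℝ E] [MeasurableSpace E]
    [BorelSpace E] (μ : Measure E) [μ.IsAddHaarMeasure] {K : NNReal} {P : E → E}
    (hP : LipschitzWith K P) {s : Set E} (hs : μ s = 0) : μ (P '' s) = 0 := by
  let ν : Measure E := μH[Module.finrank ℝ E]
  have h1 : ν s = 0 := Measure.absolutelyContinuous_isAddHaarMeasure ν μ hs
  have h2 : ν (P '' s) = 0 := by
    have := hP.hausdorffMeasure_image_le (d := Module.finrank ℝ E) (Nat.cast_nonneg _) s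
    rw [show μH[Module.finrank ℝ E] s = 0 from h1, mul_zero] at this
    exact le_antisymm this zero_le
  exact Measure.absolutelyContinuous_isAddHaarMeasure μ ν h2

/-- Rademacher's theorem together with Sard's lemma: the image of the points where a Lipschitz
map is not differentiable, or has a singular derivative, is negligible. -/
lemma LipschitzWith.ae_regular_value [FiniteDimensional ℝ E] [MeasurableSpace E]
    [BorelSpace E] (μ : Measure E) [μ.IsAddHaarMeasure] {K : NNReal} {P : E → E}
    (hP : LipschitzWith K P) :
    ∀ᵐ x ∂μ, ∀ y, P y = x → DifferentiableAt ℝ P y ∧ (fderiv ℝ P y).det ≠ 0 := by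
  have h1 : μ (P '' {y | ¬ DifferentiableAt ℝ P y}) = 0 :=
    hP.addHaar_image_eq_zero μ (ae_iff.1 hP.ae_differentiableAt)
  have h2 : μ (P '' {y | DifferentiableAt ℝ P y ∧ (fderiv ℝ P y).det = 0}) = 0 :=
    addHaar_image_eq_zero_of_det_fderivWithin_eq_zero μ (f' := fderiv ℝ P)
      (fun y hy => hy.1.hasFDerivAt.hasFDerivWithinAt) fun y hy => hy.2
  filter_upwards [measure_eq_zero_iff_ae_notMem.1 h1, measure_eq_zero_iff_ae_notMem.1 h2]
    with x hx1 hx2 y hy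
  have hd : DifferentiableAt ℝ P y := by
    by_contra hd
    exact hx1 ⟨y, hd, hy⟩
  exact ⟨hd, fun h0 => hx2 ⟨y, ⟨hd, h0⟩, hy⟩⟩

/-! ### Differentiability of the subdifferential -/

/-- Let `g` be a selection of `I + ∂f`, hence a right inverse of the proximal map `P`. Near `g x`
the derivative of `P` gives `‖P z - P (g x)‖ ≥ ‖z - g x‖ / C`. Monotonicity of `P` along
the segment from `g x` to `g x'` carries a lower bound for `‖P z - P (g x)‖` over to points far
away from `g x`, so that `g x'` cannot stay away from `g x` when `x'` tends to `x`. -/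
lemma IsProx.continuousAt_selection {f : E → ℝ} {P : E → E} (hP : IsProx f P) {g : E → E}
    (hg : ∀ x, P (g x) = x) {x : E} {T : E ≃L[ℝ] E}
    (hT : HasFDerivAt P (T : E →L[ℝ] E) (g x)) : ContinuousAt g x := by
  have hbig : (fun z => z - g x) =O[𝓝 (g x)] fun z => P z - P (g x) :=
    (hT.isThetaTVS_sub T.toHomeomorph.isInducing).isTheta.isBigO_symm
  obtain ⟨C, hC0, hC⟩ := hbig.exists_pos
  obtain ⟨δ, hδ, hball⟩ := Metric.eventually_nhds_iff.1 hC.bound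
  rw [Metric.continuousAt_iff]
  intro ε hε
  set r : ℝ := min (ε / 2) (δ / 2) with hr
  have hr0 : 0 < r := by positivity
  have hrε : r < ε := (min_le_left _ _).trans_lt (by linarith)
  have hrδ : r < δ := (min_le_right _ _).trans_lt (by linarith)
  refine ⟨r / C ^ 2, by positivity, fun {x'} hx' => ?_⟩
  by_contra! hfar
  set v := g x' - g x with hv
  have hvr : r < ‖v‖ := by rw [hv, ← dist_eq_norm]; linarith
  have hv0 : 0 < ‖v‖ := hr0.trans hvr
  set t : ℝ := r / ‖v‖ with ht
  have ht0 : 0 < t := by positivity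
  have ht1 : t < 1 := (div_lt_one hv0).2 hvr
  have htv : t * ‖v‖ = r := by rw [ht]; field_simp
  -- `z` is the point of the segment from `g x` to `g x'` at distance `r` from `g x`.
  set z := g x + t • v with hz
  have hzx : z - g x = t • v := by rw [hz]; abel
  have hzn : ‖z - g x‖ = r := by rw [hzx, norm_smul, Real.norm_of_nonneg ht0.le, htv]
  have hxz : g x' - z = (1 - t) • v := by rw [hz, hv]; module
  have h1 : r ≤ C * ‖P z - P (g x)‖ := by
    have := hball (y := z) (by rw [dist_eq_norm, hzn]; exact hrδ)
    rwa [hzn] at this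
  have h2 := (hP (g x)).sq_norm_sub_le_inner (hP z)
  have h3 := (hP z).sq_norm_sub_le_inner (hP (g x'))
  rw [hzx, inner_smul_right] at h2
  rw [hxz, inner_smul_right] at h3
  have h4 : 0 ≤ ⟪P (g x') - P z, v⟫ :=
    nonneg_of_mul_nonneg_right ((sq_nonneg _).trans h3) (by linarith)
  have h5 : ⟪P z - P (g x), v⟫ ≤ ⟪x' - x, v⟫ := by
    rw [hg] at h4
    have : x' - x = (x' - P z) + (P z - P (g x)) := by rw [hg x]; abel
    rw [this, inner_add_left]
    linarith
  have h6 : ⟪x' - x, v⟫ ≤ ‖x' - x‖ * ‖v‖ := real_inner_le_norm _ _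
  have h7 : ‖P z - P (g x)‖ ^ 2 ≤ ‖x' - x‖ * r := by
    rw [← htv]; nlinarith
  have h8 : r ^ 2 ≤ C ^ 2 * (‖x' - x‖ * r) := by
    calc r ^ 2 ≤ (C * ‖P z - P (g x)‖) ^ 2 := by gcongr
      _ = C ^ 2 * ‖P z - P (g x)‖ ^ 2 := by ring
      _ ≤ _ := by gcongr
  rw [dist_eq_norm, lt_div_iff₀ (by positivity)] at hx'
  nlinarith

/-! ### From first order to second order -/

lemma abs_sub_le_of_quadratic_error {k : ℝ → ℝ} {C D : ℝ}
    (h : ∀ s t, 0 ≤ s → s ≤ t → t ≤ 1 → |k t - k s| ≤ (t - s) * (C + (t - s) * D)) :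
    |k 1 - k 0| ≤ C := by
  have hN : ∀ N : ℕ, |k 1 - k 0| ≤ C + 1 / ((N : ℝ) + 1) * D := by
    intro N
    have hpos : (0 : ℝ) < (N : ℝ) + 1 := by positivity
    have htel := Finset.sum_range_sub (fun i : ℕ => k (i / ((N : ℝ) + 1))) (N + 1)
    have hone : (((N + 1 : ℕ) : ℝ)) / ((N : ℝ) + 1) = 1 := by push_cast; field_simp
    rw [hone, Nat.cast_zero, zero_div] at htel
    rw [← htel]
    calc |∑ i ∈ Finset.range (N + 1), (k ((i + 1 : ℕ) / ((N : ℝ) + 1)) - k (i / ((N : ℝ) + 1)))|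
        ≤ ∑ i ∈ Finset.range (N + 1),
            |k ((i + 1 : ℕ) / ((N : ℝ) + 1)) - k (i / ((N : ℝ) + 1))| :=
          Finset.abs_sum_le_sum_abs _ _
      _ ≤ ∑ i ∈ Finset.range (N + 1), (1 / ((N : ℝ) + 1)) * (C + 1 / ((N : ℝ) + 1) * D) := by
          refine Finset.sum_le_sum fun i hi => ?_
          have hi' : ((i + 1 : ℕ) : ℝ) ≤ (N : ℝ) + 1 := by
            exact_mod_cast Finset.mem_range.1 hi
          have hstep : ((i + 1 : ℕ) : ℝ) / ((N : ℝ) + 1) - i / ((N : ℝ) + 1)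
              = 1 / ((N : ℝ) + 1) := by push_cast; ring
          have := h (i / ((N : ℝ) + 1)) ((i + 1 : ℕ) / ((N : ℝ) + 1)) (by positivity)
            (by gcongr; simp) ((div_le_one hpos).2 hi')
          rwa [hstep] at this
      _ = C + 1 / ((N : ℝ) + 1) * D := by
          rw [Finset.sum_const, Finset.card_range, nsmul_eq_mul]
          push_cast
          field_simp
  have hlim : Tendsto (fun N : ℕ => C + 1 / ((N : ℝ) + 1) * D) atTop (𝓝 C) := by
    simpa using (tendsto_one_div_add_atTop_nhds_zero_nat (𝕜 := ℝ)).mul_const D |>.const_add C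
  exact ge_of_tendsto' hlim hN

/-- A function whose subgradients admit a first order expansion has a second order expansion,
obtained by integrating the subgradients along segments. -/
lemma isLittleO_of_hasFDerivAt_subgrad {f : E → ℝ} {G : E → E} (hG : ∀ x, IsSubgradAt f x (G x))
    {x : E} {A : E →L[ℝ] E} (hA : HasFDerivAt G A x) :
    (fun y => f y - (f x + ⟪G x, y - x⟫ + (1 / 2) * ⟪A (y - x), y - x⟫))
      =o[𝓝 x] fun y => ‖y - x‖ ^ 2 := by
  rw [isLittleO_iff]
  intro ε hε
  obtain ⟨δ, hδ, hball⟩ := Metric.eventually_nhds_iff.1 (isLittleO_iff.1 hA.isLittleO hε)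
  refine Metric.eventually_nhds_iff.2 ⟨δ, hδ, fun y hy => ?_⟩
  set h := y - x with hh
  set a : ℝ := ⟪A h, h⟫ with ha
  set k : ℝ → ℝ := fun t => f (x + t • h) - t * ⟪G x, h⟫ - t ^ 2 / 2 * a with hk
  have hslope : ∀ t, 0 ≤ t → t ≤ 1 →
      |⟪G (x + t • h), h⟫ - ⟪G x, h⟫ - t * a| ≤ ε * ‖h‖ ^ 2 := by
    intro t ht0 ht1
    have hn : ‖t • h‖ ≤ ‖h‖ := by
      rw [norm_smul, Real.norm_of_nonneg ht0]
      exact mul_le_of_le_one_left (norm_nonneg _) ht1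
    have h1 := hball (y := x + t • h) (by
      rw [dist_eq_norm, add_sub_cancel_left]
      rw [dist_eq_norm] at hy
      exact hn.trans_lt hy)
    rw [add_sub_cancel_left] at h1
    have h2 : ⟪G (x + t • h), h⟫ - ⟪G x, h⟫ - t * a
        = ⟪G (x + t • h) - G x - A (t • h), h⟫ := by
      rw [inner_sub_left, inner_sub_left, map_smul, real_inner_smul_left]
    rw [h2]
    calc _ ≤ ‖G (x + t • h) - G x - A (t • h)‖ * ‖h‖ := abs_real_inner_le_norm _ _
      _ ≤ (ε * ‖h‖) * ‖h‖ := by gcongr; exact h1.trans (by gcongr)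
      _ = ε * ‖h‖ ^ 2 := by ring
  have hmain : |k 1 - k 0| ≤ ε * ‖h‖ ^ 2 := by
    refine abs_sub_le_of_quadratic_error (D := |a| / 2) fun s t hs hst ht => ?_
    have u1 := hG (x + t • h) (x + s • h)
    have u2 := hG (x + s • h) (x + t • h)
    have e1 : x + s • h - (x + t • h) = (s - t) • h := by module
    have e2 : x + t • h - (x + s • h) = (t - s) • h := by module
    rw [e1, inner_smul_right] at u1
    rw [e2, inner_smul_right] at u2
    have b1 := abs_le.1 (hslope s hs (hst.trans ht))
    have b2 := abs_le.1 (hslope t (hs.trans hst) ht)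
    have hts : 0 ≤ t - s := sub_nonneg.2 hst
    have c1 := mul_le_mul_of_nonneg_left b1.1 hts
    have c2 := mul_le_mul_of_nonneg_left b2.2 hts
    have d1 := mul_le_mul_of_nonneg_left (le_abs_self a) (mul_nonneg hts hts)
    have d2 := mul_le_mul_of_nonneg_left (neg_abs_le a) (mul_nonneg hts hts)
    simp only [hk]
    rw [abs_le]
    constructor <;> nlinarith
  have hk1 : k 1 - k 0 = f y - (f x + ⟪G x, h⟫ + (1 / 2) * a) := by
    have : x + h = y := by rw [hh]; abel
    simp only [hk, one_smul, this, zero_smul, add_zero]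
    ring
  rw [← hk1, Real.norm_eq_abs, Real.norm_of_nonneg (by positivity)]
  exact hmain

/-- Aleksandrov's theorem for convex functions; the quadratic part is given by an operator that is
not claimed to be symmetric. -/
lemma ConvexOn.ae_second_order [FiniteDimensional ℝ E] [MeasurableSpace E] [BorelSpace E]
    (μ : Measure E) [μ.IsAddHaarMeasure] {f : E → ℝ} (hf : ConvexOn ℝ univ f) :
    ∀ᵐ x ∂μ, ∃ (p : E) (A : E →L[ℝ] E),
      (fun y => f y - (f x + ⟪p, y - x⟫ + (1 / 2) * ⟪A (y - x), y - x⟫))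
        =o[𝓝 x] fun y => ‖y - x‖ ^ 2 := by
  choose P hP using exists_isSubgradAt_sub hf
  choose G hG using exists_isSubgradAt hf
  have hprox : IsProx f P := hP
  have hinv : ∀ x, P (x + G x) = x := fun x => hprox.eq_of_isSubgradAt (hG x)
  filter_upwards [hprox.lipschitzWith.ae_regular_value μ] with x hx
  obtain ⟨hd, hdet⟩ := hx (x + G x) (hinv x)
  let T := (fderiv ℝ P (x + G x)).toContinuousLinearEquivOfDetNeZero hdet
  have hT : HasFDerivAt P (T : E →L[ℝ] E) (x + G x) := by
    simpa [T] using hd.hasFDerivAt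
  have hcont : ContinuousAt (fun x => x + G x) x := hprox.continuousAt_selection hinv hT
  have hg : HasFDerivAt (fun x => x + G x) (T.symm : E →L[ℝ] E) x :=
    HasFDerivAt.of_local_left_inverse hcont hT (Eventually.of_forall hinv)
  have hGd : HasFDerivAt G ((T.symm : E →L[ℝ] E) - ContinuousLinearMap.id ℝ E) x := by
    have := hg.sub (hasFDerivAt_id x)
    refine this.congr_of_eventuallyEq (Eventually.of_forall fun z => ?_)
    simp
  exact ⟨G x, _, isLittleO_of_hasFDerivAt_subgrad hG hGd⟩

/-! ### Symmetrisation -/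

/-- The symmetric part of the matrix of `A`; it has the same quadratic form as `A`. -/
def symmMatrix {d : ℕ} (A : Eucl d →L[ℝ] Eucl d) : Matrix (Fin d) (Fin d) ℝ :=
  Matrix.of fun i j =>
    (A (EuclideanSpace.single i 1) j + A (EuclideanSpace.single j 1) i) / 2

lemma symmMatrix_isSymm {d : ℕ} (A : Eucl d →L[ℝ] Eucl d) : (symmMatrix A).IsSymm := by
  ext i j
  simp [symmMatrix, add_comm]

lemma quadForm_symmMatrix {d : ℕ} (A : Eucl d →L[ℝ] Eucl d) (v : Eucl d) :
    quadForm (symmMatrix A) v = ⟪A v, v⟫ := by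
  have hv : v = ∑ i, v i • EuclideanSpace.single i (1 : ℝ) := by
    simpa using ((EuclideanSpace.basisFun (Fin d) ℝ).sum_repr v).symm
  have hA : ∀ j, A v j = ∑ i, v i * A (EuclideanSpace.single i 1) j := by
    intro j
    conv_lhs => rw [hv]
    simp [map_sum]
  have h1 : ⟪A v, v⟫ = ∑ i, ∑ j, A (EuclideanSpace.single i 1) j * v i * v j := by
    rw [Finset.sum_comm]
    simp only [PiLp.inner_apply, hA]
    refine Finset.sum_congr rfl fun j _ => ?_
    simp only [RCLike.inner_apply, conj_trivial, Finset.mul_sum]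
    exact Finset.sum_congr rfl fun i _ => by ring
  have h2 : ⟪A v, v⟫ = ∑ i, ∑ j, A (EuclideanSpace.single j 1) i * v i * v j := by
    rw [h1, Finset.sum_comm]
    exact Finset.sum_congr rfl fun i _ => Finset.sum_congr rfl fun j _ => by ring
  have h3 : quadForm (symmMatrix A) v = (⟪A v, v⟫ + ⟪A v, v⟫) / 2 := by
    nth_rewrite 1 [h1]
    rw [h2, ← Finset.sum_add_distrib, Finset.sum_div]
    refine Finset.sum_congr rfl fun i _ => ?_
    rw [← Finset.sum_add_distrib, Finset.sum_div]
    refine Finset.sum_congr rfl fun j _ => ?_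
    simp only [symmMatrix, Matrix.of_apply]
    ring
  rw [h3]
  ring

end Aleksandrov

/-- **Aleksandrov's theorem.**  A semiconvex function `φ : ℝᵈ → ℝ` is twice differentiable
almost everywhere: for a.e. `x₀` there are `p` and a symmetric matrix `A` with
`φ(x) = φ(x₀) + ⟨p, x-x₀⟩ + ½⟨A(x-x₀), x-x₀⟩ + o(|x-x₀|²)`. -/
theorem aleksandrov_theorem (d : ℕ) (φ : Eucl d → ℝ) (hφ : Semiconvex φ) :
    ∀ᵐ x₀ ∂(volume : Measure (Eucl d)),
      ∃ (p : Eucl d) (A : Matrix (Fin d) (Fin d) ℝ), A.IsSymm ∧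
        HasSecondOrderExpansionAt φ x₀ p A := by
  obtain ⟨c, -, hconv⟩ := hφ
  filter_upwards [hconv.ae_second_order volume] with x hx
  obtain ⟨p, A, hA⟩ := hx
  -- Subtracting `c |y|² / 2` shifts the gradient by `-c x` and the Hessian by `-c I`.
  refine ⟨p - c • x, symmMatrix (A - c • ContinuousLinearMap.id ℝ (Eucl d)),
    symmMatrix_isSymm _, ?_⟩
  unfold HasSecondOrderExpansionAt
  refine hA.congr_left fun y => ?_
  have hy : ‖y‖ ^ 2 = ‖x‖ ^ 2 + 2 * ⟪x, y - x⟫ + ‖y - x‖ ^ 2 := by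
    rw [← norm_add_sq_real, add_sub_cancel]
  rw [quadForm_symmMatrix, hy, inner_sub_left, real_inner_smul_left]
  simp only [sub_apply, smul_apply,
    ContinuousLinearMap.id_apply]
  rw [inner_sub_left, real_inner_smul_left, real_inner_self_eq_norm_sq]
  ring

end
end

section
/- Let φ : ℝⁿ → ℝ be semiconvex and let x̂ be a strict local maximum point of φ. For p ∈ ℝⁿ set φ_p(x) := φ(x) + ⟨p, x⟩. Then for every r > 0 and δ > 0, the set K := { x ∈ B_r(x̂) : there exists p with |p| ≤ δ such that φ_p has a local maximum at x } has positive Lebesgue measure. -/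
/-!
Fix a closed ball around `xhat` on which `xhat` is the strict maximum point. By compactness, for
all `p` in some small ball `B`, every maximum point of `φ + ⟪p, ·⟫` over the closed ball lies in
a concentric ball of a third of the radius. Let `K` be the set of the maximum points so obtained.

Semiconvexity supplies the paraboloid `φ x - ⟪p, y - x⟫ - c / 2 * ‖y - x‖ ^ 2` as a global lower
bound for `φ` wherever `φ + ⟪p, ·⟫` has a local maximum at `x` (`Semiconvex.paraboloid_le`).
Comparing the paraboloid at one point of `K` with the affine upper bound at another gives
`‖p₂ - p₁‖ ≤ 2 * c * ‖x₂ - x₁‖` (`slope_lipschitz`). So the slope `p` is a Lipschitz function of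
`x ∈ K`, and its image contains `B`. Lipschitz maps send Lebesgue null sets of `ℝᵈ` to null sets
(`null_image_of_lipschitzOn`), hence `K` is not null. No second-order differentiability of `φ` is
needed.
-/

open scoped RealInnerProductSpace
open MeasureTheory Filter Topology Asymptotics Metric Set

noncomputable section

/-- At a local maximum of `φ + ⟪p, ·⟫`, the concave paraboloid with slope `-p` and opening `c`
lies below the semiconvex function `φ` everywhere: the subgradient of the convex function
`φ + c / 2 * ‖·‖ ^ 2` there is determined by `p`. -/
lemma Semiconvex.paraboloid_le {d : ℕ} {φ : Eucl d → ℝ} {c : ℝ}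
    (hc : ConvexOn ℝ univ fun x => φ x + c * ‖x‖ ^ 2 / 2) {x p : Eucl d}
    (hx : IsLocalMax (fun y => φ y + ⟪p, y⟫) x) (v : Eucl d) :
    φ x ≤ φ (x + v) + ⟪p, v⟫ + c / 2 * ‖v‖ ^ 2 := by
  have hlim : Tendsto (fun s : ℝ => x - s • v) (𝓝[>] 0) (𝓝 x) := by
    have h : Continuous fun s : ℝ => x - s • v := by fun_prop
    have h0 := h.tendsto 0
    simp only [zero_smul, sub_zero] at h0
    exact h0.mono_left nhdsWithin_le_nhds
  -- `x` is a convex combination of `x + v` and the nearby reflected point `x - s • v`.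
  have key : ∀ᶠ s : ℝ in 𝓝[>] 0,
      φ x ≤ φ (x + v) + ⟪p, v⟫ + c / 2 * (1 + s) * ‖v‖ ^ 2 := by
    filter_upwards [hlim.eventually hx, self_mem_nhdsWithin] with s hs hs0
    have hs0 : 0 < s := hs0
    have h1 : (0 : ℝ) < 1 + s := by linarith
    have hconv := hc.2 (mem_univ (x - s • v)) (mem_univ (x + v))
      (show 0 ≤ 1 / (1 + s) by positivity) (show 0 ≤ s / (1 + s) by positivity)
      (by field_simp)
    have hcomb : (1 / (1 + s)) • (x - s • v) + (s / (1 + s)) • (x + v) = x := by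
      have e : (1 / (1 + s)) • (x - s • v) + (s / (1 + s)) • (x + v)
          = (1 / (1 + s) + s / (1 + s)) • x := by
        module
      rw [e, ← add_div, div_self h1.ne', one_smul]
    rw [hcomb] at hconv
    simp only [smul_eq_mul] at hconv
    have hconv' : (1 + s) * (φ x + c * ‖x‖ ^ 2 / 2) ≤
        (φ (x - s • v) + c * ‖x - s • v‖ ^ 2 / 2)
          + s * (φ (x + v) + c * ‖x + v‖ ^ 2 / 2) := by
      have := mul_le_mul_of_nonneg_left hconv h1.le
      refine this.trans (le_of_eq ?_)
      field_simp
    rw [norm_sub_sq_real, norm_add_sq_real, norm_smul, inner_smul_right, mul_pow,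
      Real.norm_eq_abs, sq_abs] at hconv'
    simp only [inner_sub_right, inner_smul_right] at hs
    have hfin : s * φ x ≤ s * (φ (x + v) + ⟪p, v⟫ + c / 2 * (1 + s) * ‖v‖ ^ 2) := by
      nlinarith
    exact le_of_mul_le_mul_left hfin hs0
  have hcont : Continuous fun s : ℝ =>
      φ (x + v) + ⟪p, v⟫ + c / 2 * (1 + s) * ‖v‖ ^ 2 := by fun_prop
  have ht := (hcont.tendsto 0).mono_left (nhdsWithin_le_nhds (s := Ioi 0))
  simp only [add_zero, mul_one] at ht
  exact ge_of_tendsto ht key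

/-- The slope `p` is a Lipschitz function of the maximum point, as long as both maximum points
stay well inside the ball over which the maximum is taken. -/
lemma slope_lipschitz {d : ℕ} {φ : Eucl d → ℝ} {c : ℝ} (hc0 : 0 ≤ c)
    (hc : ConvexOn ℝ univ fun x => φ x + c * ‖x‖ ^ 2 / 2) {z : Eucl d} {ρ : ℝ}
    {x₁ x₂ p₁ p₂ : Eucl d} (hx₁ : x₁ ∈ ball z (ρ / 3)) (hx₂ : x₂ ∈ ball z (ρ / 3))
    (h₁ : IsMaxOn (fun y => φ y + ⟪p₁, y⟫) (closedBall z ρ) x₁)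
    (h₂ : IsMaxOn (fun y => φ y + ⟪p₂, y⟫) (closedBall z ρ) x₂) :
    ‖p₂ - p₁‖ ≤ 2 * c * ‖x₂ - x₁‖ := by
  have hρ : 0 < ρ := by
    have := dist_nonneg.trans_lt (mem_ball.1 hx₁)
    linarith
  have hmem : ∀ x ∈ ball z (ρ / 3), x ∈ ball z ρ :=
    fun x hx => ball_subset_ball (by linarith) hx
  have hloc : IsLocalMax (fun y => φ y + ⟪p₁, y⟫) x₁ :=
    h₁.isLocalMax (mem_of_superset (isOpen_ball.mem_nhds (hmem _ hx₁)) ball_subset_closedBall)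
  have hx₂' := h₁ (ball_subset_closedBall (hmem _ hx₂))
  simp only [mem_ofPred_eq] at hx₂'
  have hdist : ‖x₂ - x₁‖ < 2 * ρ / 3 := by
    rw [← dist_eq_norm]
    have := dist_triangle_right x₂ x₁ z
    rw [mem_ball] at hx₁ hx₂
    linarith
  rcases eq_or_ne p₂ p₁ with rfl | hp
  · rw [sub_self, norm_zero]
    positivity
  have hq : 0 < ‖p₂ - p₁‖ := norm_pos_iff.2 (sub_ne_zero.2 hp)
  -- Sandwich `φ (x₂ + w)` between the paraboloid at `x₁` and the affine bound at `x₂`, where `w`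
  -- has length `t` and the direction of `p₂ - p₁`; `t` decreases to `‖x₂ - x₁‖`, which may be `0`.
  have main : ∀ᶠ t : ℝ in 𝓝[>] ‖x₂ - x₁‖, ‖p₂ - p₁‖ ≤ 2 * c * t := by
    filter_upwards [Ioo_mem_nhdsGT hdist] with t ht
    have ht0 : 0 < t := (norm_nonneg _).trans_lt ht.1
    set w : Eucl d := (t / ‖p₂ - p₁‖) • (p₂ - p₁) with hw
    have hwn : ‖w‖ = t := by
      rw [hw, norm_smul, Real.norm_of_nonneg (by positivity)]
      field_simp
    have hwi : ⟪p₂ - p₁, w⟫ = ‖p₂ - p₁‖ * t := by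
      rw [hw, inner_smul_right, real_inner_self_eq_norm_sq]
      field_simp
    have hup := h₂ (show x₂ + w ∈ closedBall z ρ by
      rw [mem_closedBall, dist_eq_norm]
      rw [mem_ball, dist_eq_norm] at hx₂
      have := norm_add_le (x₂ - z) w
      rw [show x₂ + w - z = x₂ - z + w by abel]
      linarith [ht.2])
    have hlow := Semiconvex.paraboloid_le hc hloc (x₂ - x₁ + w)
    rw [show x₁ + (x₂ - x₁ + w) = x₂ + w by abel] at hlow
    have hn : ‖x₂ - x₁ + w‖ ^ 2 ≤ (2 * t) ^ 2 := by
      have := norm_add_le (x₂ - x₁) w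
      gcongr
      linarith [ht.1]
    have hcn := mul_le_mul_of_nonneg_left hn (show 0 ≤ c / 2 by linarith)
    clear_value w
    simp only [mem_ofPred_eq, inner_add_right, inner_sub_right, inner_sub_left] at hup hlow hwi
    have hfin : ‖p₂ - p₁‖ * t ≤ (2 * c * t) * t := by linarith
    exact le_of_mul_le_mul_right hfin ht0
  have hcont : Continuous fun t : ℝ => 2 * c * t := by fun_prop
  exact ge_of_tendsto ((hcont.tendsto ‖x₂ - x₁‖).mono_left nhdsWithin_le_nhds) main

lemma null_image_of_lipschitzOn {d : ℕ} {g : Eucl d → Eucl d} {s : Set (Eucl d)} {L : NNReal}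
    (hg : LipschitzOnWith L g s) (hs : volume s = 0) : volume (g '' s) = 0 := by
  -- In dimension `d`, the measure `μH[d]` is a Haar measure, so it has the Lebesgue null sets.
  have haar : (Measure.hausdorffMeasure (d : ℝ) : Measure (Eucl d)).IsAddHaarMeasure := by
    simpa using isAddHaarMeasure_hausdorffMeasure (E := Eucl d)
  have h0 : Measure.hausdorffMeasure (d : ℝ) s = 0 :=
    Measure.absolutelyContinuous_isAddHaarMeasure _ volume hs
  have h1 := hg.hausdorffMeasure_image_le (d := (d : ℝ)) (by positivity)
  rw [h0, mul_zero, nonpos_iff_eq_zero] at h1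
  exact Measure.absolutelyContinuous_isAddHaarMeasure volume _ h1

/-- For small `p`, maximum points of `φ + ⟪p, ·⟫` over a closed ball around a strict maximum point
`z` of `φ` exist and stay within a third of the radius from `z`. -/
lemma exists_interior_max_s9 {d : ℕ} {φ : Eucl d → ℝ} (hcont : Continuous φ) {z : Eucl d} {ρ : ℝ}
    (hρ : 0 < ρ) (hz : ∀ y ∈ closedBall z ρ, y ≠ z → φ y < φ z) :
    ∃ η > 0, ∀ p : Eucl d, ‖p‖ ≤ η →
      ∃ x ∈ ball z (ρ / 3), IsMaxOn (fun y => φ y + ⟪p, y⟫) (closedBall z ρ) x := by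
  obtain ⟨ε, hε, hgap⟩ : ∃ ε > 0, ∀ y ∈ closedBall z ρ \ ball z (ρ / 3), φ y ≤ φ z - ε := by
    have hcomp : IsCompact (closedBall z ρ \ ball z (ρ / 3)) :=
      (isCompact_closedBall z ρ).diff isOpen_ball
    rcases (closedBall z ρ \ ball z (ρ / 3)).eq_empty_or_nonempty with he | hne
    · exact ⟨1, one_pos, fun y hy => by simp [he] at hy⟩
    · obtain ⟨m, hm, hmax⟩ := hcomp.exists_isMaxOn hne hcont.continuousOn
      have hmz : m ≠ z := by
        rintro rfl
        exact hm.2 (mem_ball_self (by positivity))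
      refine ⟨φ z - φ m, sub_pos.2 (hz m hm.1 hmz), fun y hy => ?_⟩
      have := hmax hy
      simp only [mem_ofPred_eq] at this
      linarith
  refine ⟨ε / (2 * ρ), by positivity, fun p hp => ?_⟩
  have hpcont : Continuous fun y => φ y + ⟪p, y⟫ := by fun_prop
  obtain ⟨x, hx, hmax⟩ := (isCompact_closedBall z ρ).exists_isMaxOn
    ⟨z, mem_closedBall_self hρ.le⟩ hpcont.continuousOn
  refine ⟨x, ?_, hmax⟩
  by_contra hout
  have hφ := hgap x ⟨hx, hout⟩
  have hzx := hmax (mem_closedBall_self hρ.le)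
  simp only [mem_ofPred_eq] at hzx
  rw [mem_closedBall, dist_eq_norm] at hx
  have hip : ⟪p, x - z⟫ ≤ ε / (2 * ρ) * ρ :=
    (real_inner_le_norm p (x - z)).trans (by gcongr)
  have he : ε / (2 * ρ) * ρ = ε / 2 := by field_simp
  rw [inner_sub_right] at hip
  linarith

/-- **Jensen's Lemma.**  If `φ : ℝᵈ → ℝ` is semiconvex and has a strict local maximum at
`x̂`, then for every `r, δ > 0` the set of points `x ∈ B_r(x̂)` at which some perturbation
`φ_p = φ + ⟨p, ·⟩` with `|p| ≤ δ` attains a local maximum has positive Lebesgue measure. -/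
theorem jensens_lemma (d : ℕ) (φ : Eucl d → ℝ) (hφ : Semiconvex φ) (xhat : Eucl d)
    (hstrict : ∃ U ∈ nhds xhat, ∀ y ∈ U, y ≠ xhat → φ y < φ xhat)
    (r δ : ℝ) (hr : 0 < r) (hδ : 0 < δ) :
    0 < volume {x ∈ Metric.ball xhat r |
      ∃ p : Eucl d, ‖p‖ ≤ δ ∧ IsLocalMax (fun y => φ y + ⟪p, y⟫) x} := by
  obtain ⟨c, hc0, hc⟩ := hφ
  obtain ⟨U, hU, hmaxU⟩ := hstrict
  have hcont : Continuous φ := by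
    have h := (continuousOn_univ.1 (hc.continuousOn isOpen_univ)).sub
      (show Continuous fun x : Eucl d => c * ‖x‖ ^ 2 / 2 by fun_prop)
    exact h.congr fun x => by simp [Pi.sub_apply]
  obtain ⟨ρ, hρ, hρU⟩ := Metric.nhds_basis_closedBall.mem_iff.1
    (inter_mem hU (ball_mem_nhds xhat hr))
  obtain ⟨η, hη, hex⟩ := exists_interior_max_s9 hcont hρ
    (fun y hy hne => hmaxU y (hρU hy).1 hne)
  set B : Set (Eucl d) := ball 0 (min δ η) with hB
  set K : Set (Eucl d) := {x | x ∈ ball xhat (ρ / 3) ∧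
    ∃ p ∈ B, IsMaxOn (fun y => φ y + ⟪p, y⟫) (closedBall xhat ρ) x} with hK
  have hKsub : K ⊆ {x ∈ Metric.ball xhat r |
      ∃ p : Eucl d, ‖p‖ ≤ δ ∧ IsLocalMax (fun y => φ y + ⟪p, y⟫) x} := by
    rintro x ⟨hx, p, hp, hmax⟩
    have hxρ : x ∈ ball xhat ρ := ball_subset_ball (by linarith) hx
    rw [hB, mem_ball_zero_iff, lt_min_iff] at hp
    exact ⟨(hρU (ball_subset_closedBall hxρ)).2, p, hp.1.le,
      hmax.isLocalMax (mem_of_superset (isOpen_ball.mem_nhds hxρ) ball_subset_closedBall)⟩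
  refine lt_of_lt_of_le (pos_iff_ne_zero.2 fun hnull => ?_) (measure_mono hKsub)
  have hslope : ∀ x, ∃ p : Eucl d, x ∈ K →
      IsMaxOn (fun y => φ y + ⟪p, y⟫) (closedBall xhat ρ) x := by
    intro x
    by_cases hx : x ∈ K
    · obtain ⟨-, p, -, hp⟩ := hx
      exact ⟨p, fun _ => hp⟩
    · exact ⟨0, fun h => absurd h hx⟩
  choose g hg using hslope
  have hLip : LipschitzOnWith ⟨2 * c, by positivity⟩ g K := by
    refine LipschitzOnWith.of_dist_le_mul fun x hx y hy => ?_
    rw [dist_eq_norm, dist_eq_norm]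
    exact slope_lipschitz hc0 hc hy.1 hx.1 (hg y hy) (hg x hx)
  have hBsub : B ⊆ g '' K := by
    intro p hp
    obtain ⟨x, hx, hmax⟩ := hex p (by
      rw [hB, mem_ball_zero_iff, lt_min_iff] at hp
      exact hp.2.le)
    have hxK : x ∈ K := ⟨hx, p, hp, hmax⟩
    refine ⟨x, hxK, ?_⟩
    -- The Lipschitz bound at coinciding points says that the slope is unique.
    have := slope_lipschitz hc0 hc hx hx hmax (hg x hxK)
    rw [sub_self, norm_zero, mul_zero, norm_le_zero_iff, sub_eq_zero] at this
    exact this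
  have hBnull := measure_mono_null hBsub (null_image_of_lipschitzOn hLip hnull)
  exact (measure_ball_pos volume (0 : Eucl d) (lt_min hδ hη)).ne' hBnull

end
end

section
/- Let B₁ ⊂ ℝⁿ be the open unit ball, let F : S(n) × ℝⁿ × ℝ × B̄₁ → ℝ and f : B̄₁ → ℝ be continuous, with F degenerate elliptic (i.e. F(M+N,P,r,x) ≤ F(M,P,r,x) whenever N is positive semidefinite), and let u be a bounded continuous viscosity subsolution of F(D²u, Du, u, x) = f(x) in B₁. Fix ε > 0 and let u^ε be the sup-convolution of u (taken over B̄₁). Then for almost every x ∈ B_{1 - 2(ε‖u‖_∞)^{1/2}} the following holds: if u^ε admits at x a second-order expansion u^ε(y) = u^ε(x) + ⟨p, y-x⟩ + (1/2)⟨M^ε(x)(y-x), y-x⟩ + o(|y-x|²), and if x^ε ∈ B̄₁ is any point satisfying u^ε(x) = u(x^ε) - |x^ε - x|²/(2ε), then F(M^ε(x), p, u(x^ε), x^ε) ≤ f(x^ε). -/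
/-!
The conclusion holds at every point `x` of the smaller ball, not merely almost everywhere. Write
`a` for the maximizer `x^ε`. Comparing the values at `a` and at `x` in the supremum gives
`‖a - x‖ ≤ 2 (ε‖u‖_∞)^{1/2}`, so `a` lies in the open unit ball. For `z` near `a`, testing the
supremum defining `u^ε(z - a + x)` with `z` gives `u(z) ≤ u^ε(z - a + x) + ‖a - x‖² / (2ε)`, with
equality at `z = a`. The second-order expansion of `u^ε` at `x` then shows that, for each `δ > 0`,
the quadratic polynomial `quadPoly a p (M + δI)` touches `u` from above at `a` up to a constant.
Its gradient and Hessian at `a` are `p` and `M + δI`, so the subsolution property yields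
`F(M + δI, p, u(a), a) ≤ f(a)`, and `δ → 0` concludes by continuity of `F`.
-/

open scoped RealInnerProductSpace
open MeasureTheory Filter Topology Asymptotics Metric Set

noncomputable section

/-- The quadratic polynomial `z ↦ ⟨p, z - a⟩ + ½⟨N(z - a), z - a⟩`, used as a test function. -/
def quadPoly {d : ℕ} (a p : Eucl d) (N : Matrix (Fin d) (Fin d) ℝ) (z : Eucl d) : ℝ :=
  ⟪p, z - a⟫ + (1 / 2) * quadForm N (z - a)

theorem quadForm_zero {d : ℕ} (N : Matrix (Fin d) (Fin d) ℝ) : quadForm N 0 = 0 := by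
  simp [quadForm]

theorem quadForm_add_smul_one {d : ℕ} (M : Matrix (Fin d) (Fin d) ℝ) (δ : ℝ) (v : Eucl d) :
    quadForm (M + δ • 1) v = quadForm M v + δ * ‖v‖ ^ 2 := by
  rw [EuclideanSpace.real_norm_sq_eq, Finset.mul_sum]
  simp only [quadForm, Matrix.add_apply, Matrix.smul_apply, smul_eq_mul, add_mul,
    Finset.sum_add_distrib, Matrix.one_apply]
  congr 1
  refine Finset.sum_congr rfl fun i _ => ?_
  simp only [mul_ite, mul_one, mul_zero, ite_mul, zero_mul, Finset.sum_ite_eq, Finset.mem_univ,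
    if_true]
  ring

theorem contDiff_quadPoly {d : ℕ} (a p : Eucl d) (N : Matrix (Fin d) (Fin d) ℝ) :
    ContDiff ℝ 2 (quadPoly a p N) := by
  unfold quadPoly quadForm
  exact (contDiff_const.inner ℝ (contDiff_id.sub contDiff_const)).add (by fun_prop)

theorem fderiv_quadPoly {d : ℕ} (a p : Eucl d) {N : Matrix (Fin d) (Fin d) ℝ} (hN : N.IsSymm)
    (y : Eucl d) (j : Fin d) :
    fderiv ℝ (quadPoly a p N) y (EuclideanSpace.single j 1) =
      p j + ∑ k, N j k * (y - a) k := by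
  have hc : ∀ i, HasFDerivAt (fun z : Eucl d => (z - a) i)
      (EuclideanSpace.proj i : Eucl d →L[ℝ] ℝ) y := fun i =>
    (EuclideanSpace.proj i : Eucl d →L[ℝ] ℝ).hasFDerivAt.comp y ((hasFDerivAt_id y).sub_const a)
  have hp : HasFDerivAt (fun z : Eucl d => ⟪p, z - a⟫) (innerSL ℝ p) y :=
    (innerSL ℝ p).hasFDerivAt.comp y ((hasFDerivAt_id y).sub_const a)
  have hq := HasFDerivAt.fun_sum (u := Finset.univ) fun i _ =>
    HasFDerivAt.fun_sum (u := Finset.univ) fun k _ => ((hc i).const_mul (N i k)).mul (hc k)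
  have h := hp.add (hq.const_mul (1 / 2))
  have h' : HasFDerivAt (quadPoly a p N) _ y := h
  rw [h'.fderiv]
  have hs : ∀ k, N k j = N j k := fun k => hN.apply j k
  simp [Finset.sum_add_distrib, EuclideanSpace.inner_single_right, Finset.mul_sum, hs]
  rw [← Finset.sum_add_distrib]
  exact Finset.sum_congr rfl fun k _ => by ring

theorem gradAt_quadPoly {d : ℕ} (a p : Eucl d) {N : Matrix (Fin d) (Fin d) ℝ} (hN : N.IsSymm) :
    gradAt (quadPoly a p N) a = p := by
  ext i
  simp [gradAt, fderiv_quadPoly a p hN]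

theorem hessAt_quadPoly {d : ℕ} (a p : Eucl d) {N : Matrix (Fin d) (Fin d) ℝ} (hN : N.IsSymm) :
    hessAt (quadPoly a p N) a = N := by
  ext i j
  have hc : ∀ i, HasFDerivAt (fun z : Eucl d => (z - a) i)
      (EuclideanSpace.proj i : Eucl d →L[ℝ] ℝ) a := fun i =>
    (EuclideanSpace.proj i : Eucl d →L[ℝ] ℝ).hasFDerivAt.comp a ((hasFDerivAt_id a).sub_const a)
  have h := (HasFDerivAt.fun_sum (u := Finset.univ) fun k _ =>
    (hc k).const_mul (N j k)).const_add (p j)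
  simp only [hessAt, Matrix.of_apply, fderiv_quadPoly a p hN]
  rw [h.fderiv]
  simp [hN.apply i j]

/-- **Sup-convolutions are subsolutions.**  Let `u` be a bounded continuous viscosity
subsolution of `F(D²u, Du, u, x) = f(x)` in `B₁`, with `F`, `f` continuous and `F`
degenerate elliptic.  Then for a.e. `x ∈ B_{1 - 2(ε‖u‖_∞)^{1/2}}`: whenever the
sup-convolution `u^ε` admits a second-order expansion at `x` with data `(p, Mεx)` and
`x^ε ∈ B̄₁` satisfies `u^ε(x) = u(x^ε) - |x^ε - x|²/(2ε)`, one has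
`F(Mεx, p, u(x^ε), x^ε) ≤ f(x^ε)`. -/
theorem supConv_is_subsolution (d : ℕ)
    (F : Matrix (Fin d) (Fin d) ℝ → Eucl d → ℝ → Eucl d → ℝ)
    (f : Eucl d → ℝ)
    (hFcont : ContinuousOn
      (fun q : Matrix (Fin d) (Fin d) ℝ × Eucl d × ℝ × Eucl d =>
        F q.1 q.2.1 q.2.2.1 q.2.2.2)
      (univ ×ˢ univ ×ˢ univ ×ˢ closure (Metric.ball (0 : Eucl d) 1)))
    (hfcont : ContinuousOn f (closure (Metric.ball (0 : Eucl d) 1)))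
    (hdegell : ∀ (M N : Matrix (Fin d) (Fin d) ℝ), N.PosSemidef →
      ∀ (P : Eucl d) (r : ℝ) (x : Eucl d), F (M + N) P r x ≤ F M P r x)
    (u : Eucl d → ℝ)
    (hucont : ContinuousOn u (closure (Metric.ball (0 : Eucl d) 1)))
    (hubdd : ∃ C : ℝ, ∀ y ∈ closure (Metric.ball (0 : Eucl d) 1), |u y| ≤ C)
    (husub : ViscSubsol (Metric.ball (0 : Eucl d) 1) F f u)
    (ε : ℝ) (hε : 0 < ε) :
    ∀ᵐ x ∂(volume : Measure (Eucl d)),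
      x ∈ Metric.ball (0 : Eucl d)
            (1 - 2 * Real.sqrt (ε * supNorm (Metric.ball (0 : Eucl d) 1) u)) →
      ∀ (p : Eucl d) (Mεx : Matrix (Fin d) (Fin d) ℝ), Mεx.IsSymm →
        HasSecondOrderExpansionAt (supConv (Metric.ball (0 : Eucl d) 1) u ε) x p Mεx →
        ∀ xε ∈ closure (Metric.ball (0 : Eucl d) 1),
          supConv (Metric.ball (0 : Eucl d) 1) u ε x = u xε - ‖xε - x‖ ^ 2 / (2 * ε) →
          F Mεx p (u xε) xε ≤ f xε := by
  refine Eventually.of_forall fun x hx p M hM hexp a ha hax => ?_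
  obtain ⟨C, hC⟩ := hubdd
  set B : Set (Eucl d) := Metric.ball (0 : Eucl d) 1 with hB
  have hle : ∀ y, ∀ z ∈ closure B, u z - ‖y - z‖ ^ 2 / (2 * ε) ≤ supConv B u ε y := by
    intro y z hz
    refine le_csSup ⟨C, ?_⟩ (mem_image_of_mem _ hz)
    rintro _ ⟨w, hw, rfl⟩
    have h1 := (abs_le.1 (hC w hw)).2
    have h2 : 0 ≤ ‖y - w‖ ^ 2 / (2 * ε) := by positivity
    simp only
    linarith
  have hnorm : ∀ z ∈ closure B, |u z| ≤ supNorm B u := by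
    intro z hz
    refine le_csSup ⟨C, ?_⟩ (mem_image_of_mem _ hz)
    rintro _ ⟨w, hw, rfl⟩
    exact hC w hw
  -- Comparison with the competitor `y = x` bounds `‖a - x‖`, so the maximizer `a` is interior.
  have haB : a ∈ B := by
    have hs0 := Real.sqrt_nonneg (ε * supNorm B u)
    have hxn : ‖x‖ < 1 - 2 * Real.sqrt (ε * supNorm B u) := by simpa using hx
    have hxB : x ∈ closure B := subset_closure (by simp only [hB, mem_ball_zero_iff]; linarith)
    have h1 := hle x x hxB
    rw [hax] at h1
    have h2 := (abs_le.1 (hnorm a ha)).2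
    have h3 := (abs_le.1 (hnorm x hxB)).1
    simp only [sub_self, norm_zero] at h1
    have h4 : ‖a - x‖ ^ 2 / (2 * ε) ≤ 2 * supNorm B u := by
      norm_num at h1
      linarith
    rw [div_le_iff₀ (by positivity)] at h4
    have hsn : 0 ≤ supNorm B u := (abs_nonneg _).trans (hnorm a ha)
    have h5 : ‖a - x‖ ≤ 2 * Real.sqrt (ε * supNorm B u) := by
      refine abs_le_of_sq_le_sq' ?_ (by positivity) |>.2
      rw [mul_pow, Real.sq_sqrt (by positivity)]
      linarith
    have h6 : ‖a‖ ≤ ‖a - x‖ + ‖x‖ := by simpa using norm_add_le (a - x) x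
    simp only [hB, mem_ball_zero_iff]
    linarith
  have hδ : ∀ δ : ℝ, 0 < δ → F (M + δ • 1) p (u a) a ≤ f a := by
    intro δ hδ
    have hN : (M + δ • (1 : Matrix (Fin d) (Fin d) ℝ)).IsSymm := by
      unfold Matrix.IsSymm
      simp [hM.eq]
    have := husub a haB (quadPoly a p (M + δ • 1)) (contDiff_quadPoly _ _ _).contDiffAt ?_
    · rwa [hessAt_quadPoly _ _ hN, gradAt_quadPoly _ _ hN] at this
    have ht : Tendsto (fun z : Eucl d => z - a + x) (𝓝 a) (𝓝 x) := by
      have : Continuous (fun z : Eucl d => z - a + x) := by fun_prop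
      simpa using this.tendsto a
    have hE := ht.eventually (hexp.bound (show 0 < δ / 2 by positivity))
    filter_upwards [hE, isOpen_ball.mem_nhds haB] with z hz hzB
    -- Translate the competitor along with the base point: `y = z - a + x` has `y - z = x - a`.
    have h1 := hle (z - a + x) z (subset_closure hzB)
    have e1 : z - a + x - z = -(a - x) := by abel
    have e2 : z - a + x - x = z - a := by abel
    rw [e1, norm_neg] at h1
    rw [e2, Real.norm_eq_abs, Real.norm_eq_abs, abs_of_nonneg (sq_nonneg ‖z - a‖)] at hz
    have h2 := (abs_le.1 hz).2
    rw [hax] at h2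
    simp only [quadPoly, quadForm_add_smul_one, sub_self, inner_zero_right,
      quadForm_zero]
    linarith
  -- Let `δ → 0⁺`, using continuity of `F` in its matrix argument.
  have hcont : Continuous fun δ : ℝ => F (M + δ • 1) p (u a) a := by
    have hg : Continuous fun δ : ℝ =>
        ((M + δ • (1 : Matrix (Fin d) (Fin d) ℝ), p, u a, a) :
          Matrix (Fin d) (Fin d) ℝ × Eucl d × ℝ × Eucl d) := by fun_prop
    exact hFcont.comp_continuous hg fun δ => ⟨mem_univ _, mem_univ _, mem_univ _, ha⟩
  have hlim : Tendsto (fun δ : ℝ => F (M + δ • 1) p (u a) a) (𝓝[>] 0) (𝓝 (F M p (u a) a)) := by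
    have := hcont.tendsto 0
    simp only [zero_smul, add_zero] at this
    exact this.mono_left nhdsWithin_le_nhds
  exact le_of_tendsto hlim (eventually_mem_nhdsWithin.mono fun δ h => hδ δ h)

end
end
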